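/- arXiv:1307.5481 — 6 statements merged into one kernel-verified Lean document; each statement's English description precedes it below -/
import Mathlib

section
/- (Lemma 2.1, necessity of the exponent relation by scaling.) Let p, q ∈ (1,∞) and K ∈ (0,∞). Suppose f : (0,∞) → [0,∞) is measurable with 0 < ‖f‖_p < ∞ and 0 < ‖U[f]‖_q, and suppose that for every γ > 0 the dilated function f_γ(t) := f(γt) satisfies ‖U[f_γ]‖_q ≤ K · ‖f_γ‖_p. Then necessarily 1 + 1/q = 1/p + α + β + λ. -/
/-!
The proof is by scaling. The substitution `z = γ y` gives
`U[f_γ](x) = γ ^ (α + β + λ - 1) * U[f](γ x)` for `x > 0`, and dilation by `γ` multiplies an `L_r`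
norm on the half-line by `γ ^ (-1/r)`. The assumed bound therefore reads
`γ ^ s * ‖U[f]‖_q ≤ K * ‖f‖_p` for every `γ > 0`, with `s = α + β + λ - 1 - 1/q + 1/p`.
At `γ = 1` this shows `‖U[f]‖_q < ∞`; since `‖U[f]‖_q > 0` and `γ ^ s` is unbounded on `(0, ∞)`
unless `s = 0`, it follows that `s = 0`.
-/

open MeasureTheory Set

/-- The generalized Cesàro–Hardy operator:
`U[f](x) = x^(-β) ∫₀ˣ y^(-α) f(y) |x-y|^(-λ) dy`. -/
noncomputable def cesaroHardy (α β lam : ℝ) (f : ℝ → ℝ) (x : ℝ) : ℝ :=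
  x ^ (-β) * ∫ y in Ioo (0 : ℝ) x, y ^ (-α) * f y * |x - y| ^ (-lam)

/-- Valid without integrability assumptions: the change of variables also holds for
integrals with the junk value `0`. -/
lemma cesaroHardy_dilation (α β lam : ℝ) (f : ℝ → ℝ) {γ x : ℝ} (hγ : 0 < γ) (hx : 0 < x) :
    cesaroHardy α β lam (fun t => f (γ * t)) x
      = γ ^ (α + β + lam - 1) * cesaroHardy α β lam f (γ * x) := by
  unfold cesaroHardy
  have hγx : 0 < γ * x := mul_pos hγ hx
  rw [← integral_Ioc_eq_integral_Ioo, ← integral_Ioc_eq_integral_Ioo,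
    ← intervalIntegral.integral_of_le hx.le, ← intervalIntegral.integral_of_le hγx.le]
  have h1 : (∫ y in (0 : ℝ)..x, y ^ (-α) * f (γ * y) * |x - y| ^ (-lam))
      = ∫ y in (0 : ℝ)..x, γ ^ (α + lam) *
          ((γ * y) ^ (-α) * f (γ * y) * |γ * x - γ * y| ^ (-lam)) := by
    apply intervalIntegral.integral_congr
    intro y hy
    rw [uIcc_of_le hx.le] at hy
    have e : |γ * x - γ * y| = γ * |x - y| := by
      rw [← mul_sub, abs_mul, abs_of_pos hγ]
    simp only [e]
    rw [Real.mul_rpow hγ.le hy.1, Real.mul_rpow hγ.le (abs_nonneg _), Real.rpow_add hγ,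
      Real.rpow_neg hγ.le, Real.rpow_neg hγ.le]
    have := (Real.rpow_pos_of_pos hγ α).ne'
    have := (Real.rpow_pos_of_pos hγ lam).ne'
    field_simp
  have h2 := intervalIntegral.integral_comp_mul_left (a := 0) (b := x)
    (fun z => z ^ (-α) * f z * |γ * x - z| ^ (-lam)) hγ.ne'
  rw [h1, intervalIntegral.integral_const_mul, h2, mul_zero, smul_eq_mul,
    Real.mul_rpow hγ.le hx.le,
    show α + β + lam - 1 = (α + lam) + β + (-1) by ring, Real.rpow_add hγ _ (-1),
    Real.rpow_add hγ _ β,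
    Real.rpow_neg_one, Real.rpow_neg hγ.le]
  have := (Real.rpow_pos_of_pos hγ β).ne'
  field_simp

lemma map_mul_left_restrict_Ioi {γ : ℝ} (hγ : 0 < γ) :
    Measure.map (fun x => γ * x) (volume.restrict (Ioi (0 : ℝ)))
      = ENNReal.ofReal γ⁻¹ • volume.restrict (Ioi (0 : ℝ)) := by
  have hpre : (fun x => γ * x) ⁻¹' Ioi (0 : ℝ) = Ioi 0 := by
    ext x; simp [hγ]
  have h := Real.map_volume_mul_left hγ.ne'
  rw [← Measure.restrict_smul, ← abs_of_pos (inv_pos.2 hγ), ← h,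
    Measure.restrict_map (measurable_const_mul γ) measurableSet_Ioi, hpre]

/-- No measurability of `g` is needed, since dilation is a measurable embedding. -/
lemma eLpNorm_dilation (g : ℝ → ℝ) {γ r : ℝ} (hγ : 0 < γ) (hr : 1 < r) :
    eLpNorm (fun x => g (γ * x)) (ENNReal.ofReal r) (volume.restrict (Ioi 0))
      = ENNReal.ofReal (γ ^ (-(1 / r))) *
        eLpNorm g (ENNReal.ofReal r) (volume.restrict (Ioi 0)) := by
  have hr0 : 0 < r := by linarith
  have h := (measurableEmbedding_mulLeft₀ hγ.ne').eLpNorm_map_measure (g := g)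
    (p := ENNReal.ofReal r) (μ := volume.restrict (Ioi (0 : ℝ)))
  change _ = eLpNorm (fun x => g (γ * x)) _ _ at h
  rw [← h, map_mul_left_restrict_Ioi hγ,
    eLpNorm_smul_measure_of_ne_top ENNReal.ofReal_ne_top, smul_eq_mul, ENNReal.toReal_div,
    ENNReal.toReal_ofReal hr0.le, ENNReal.toReal_one,
    ENNReal.ofReal_rpow_of_pos (inv_pos.2 hγ), Real.inv_rpow hγ.le, Real.rpow_neg hγ.le]

lemma eq_zero_of_rpow_mul_le {A B s : ℝ} (hA : 0 < A)
    (h : ∀ γ : ℝ, 0 < γ → γ ^ s * A ≤ B) : s = 0 := by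
  by_contra hs
  have hB : 0 < B := by simpa using hA.trans_le (by simpa using h 1 one_pos)
  have hpos : 0 < (B + 1) / A := by positivity
  -- this dilation makes the left-hand side equal to `B + 1`
  have h1 := h (((B + 1) / A) ^ s⁻¹) (Real.rpow_pos_of_pos hpos _)
  rw [Real.rpow_inv_rpow hpos.le hs, div_mul_cancel₀ _ hA.ne'] at h1
  linarith

/-- Lemma 2.1: if a bound `‖U[f_γ]‖_q ≤ K ‖f_γ‖_p` holds for all dilations
`f_γ(t) = f(γt)` of a fixed nontrivial nonnegative `f ∈ L_p`, then necessarily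
`1 + 1/q = 1/p + α + β + λ`. -/
theorem exponent_relation_of_dilation_bound
    (α β lam : ℝ) (hα : α ∈ Ioo (0 : ℝ) 1) (hβ : β ∈ Ioo (0 : ℝ) 1)
    (hlam : lam ∈ Ioo (0 : ℝ) 1) (hκ : α + β + lam < 1)
    (p q K : ℝ) (hp : 1 < p) (hq : 1 < q) (hK : 0 < K)
    (f : ℝ → ℝ) (hf : Measurable f) (hf0 : ∀ x, 0 ≤ f x)
    (hfp_pos : 0 < eLpNorm f (ENNReal.ofReal p) (volume.restrict (Ioi 0)))
    (hfp_fin : eLpNorm f (ENNReal.ofReal p) (volume.restrict (Ioi 0)) < ⊤)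
    (hU_pos : 0 < eLpNorm (cesaroHardy α β lam f) (ENNReal.ofReal q)
        (volume.restrict (Ioi 0)))
    (hbound : ∀ γ : ℝ, 0 < γ →
      eLpNorm (cesaroHardy α β lam (fun t => f (γ * t))) (ENNReal.ofReal q)
          (volume.restrict (Ioi 0))
        ≤ ENNReal.ofReal K *
            eLpNorm (fun t => f (γ * t)) (ENNReal.ofReal p)
              (volume.restrict (Ioi 0))) :
    1 + 1 / q = 1 / p + (α + β + lam) := by
  set N := eLpNorm (cesaroHardy α β lam f) (ENNReal.ofReal q) (volume.restrict (Ioi 0)) with hN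
  set M := eLpNorm f (ENNReal.ofReal p) (volume.restrict (Ioi 0)) with hM
  have key : ∀ γ : ℝ, 0 < γ →
      ENNReal.ofReal (γ ^ (α + β + lam - 1)) * (ENNReal.ofReal (γ ^ (-(1 / q))) * N)
        ≤ ENNReal.ofReal K * (ENNReal.ofReal (γ ^ (-(1 / p))) * M) := by
    intro γ hγ
    have h := hbound γ hγ
    rw [eLpNorm_dilation f hγ hp] at h
    have hae : cesaroHardy α β lam (fun t => f (γ * t)) =ᵐ[volume.restrict (Ioi 0)]
        (γ ^ (α + β + lam - 1)) • fun x => cesaroHardy α β lam f (γ * x) := by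
      filter_upwards [ae_restrict_mem measurableSet_Ioi] with x hx
      exact cesaroHardy_dilation α β lam f hγ hx
    rw [eLpNorm_congr_ae hae, eLpNorm_const_smul, eLpNorm_dilation _ hγ hq,
      Real.enorm_of_nonneg (Real.rpow_nonneg hγ.le _)] at h
    exact h
  have hNfin : N ≠ ⊤ := by
    have h := key 1 one_pos
    simp only [Real.one_rpow, ENNReal.ofReal_one, one_mul] at h
    exact (h.trans_lt (ENNReal.mul_lt_top ENNReal.ofReal_lt_top hfp_fin)).ne
  have hs : α + β + lam - 1 - 1 / q + 1 / p = 0 := by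
    refine eq_zero_of_rpow_mul_le (A := N.toReal) (B := K * M.toReal)
      (ENNReal.toReal_pos hU_pos.ne' hNfin) fun γ hγ => ?_
    have h := ENNReal.toReal_mono (by finiteness) (key γ hγ)
    simp only [ENNReal.toReal_mul, ENNReal.toReal_ofReal (Real.rpow_nonneg hγ.le _),
      ENNReal.toReal_ofReal hK.le] at h
    have hp' := Real.rpow_pos_of_pos hγ (1 / p)
    rw [Real.rpow_neg hγ.le (1 / p)] at h
    calc γ ^ (α + β + lam - 1 - 1 / q + 1 / p) * N.toReal
        = γ ^ (1 / p) * (γ ^ (α + β + lam - 1) * (γ ^ (-(1 / q)) * N.toReal)) := by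
          rw [Real.rpow_add hγ, sub_eq_add_neg _ (1 / q), Real.rpow_add hγ _ (-(1 / q))]
          ring
      _ ≤ γ ^ (1 / p) * (K * ((γ ^ (1 / p))⁻¹ * M.toReal)) :=
          mul_le_mul_of_nonneg_left h hp'.le
      _ = K * M.toReal := by field_simp
  linarith
end

section
/- (Lemma 2.2, unboundedness for p ≤ p_−.) For every p with 1 < p ≤ p_− = 1/(1−α), letting q be defined by 1 + 1/q = 1/p + κ (so q > 0), there exists a nonnegative function f ∈ L_p((0,∞)) with ‖U[f]‖_q = +∞; consequently there is no finite constant K with ‖U[g]‖_q ≤ K ‖g‖_p for all g ∈ L_p((0,∞)). -/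
/-!
The obstruction is local at the origin: `p ≤ 1 / (1 - α)` says exactly that `y ^ (-α)` fails to lie
in the dual space of `L_p` near `0`. The function `f y = y ^ (α - 1) / |log y|` on `(0, e⁻¹)` (zero
elsewhere) witnesses this. Under the substitution `y = exp (-t)`, `∫ f ^ p` is bounded by
`∫_1^∞ t ^ (-p) dt < ∞` (`lqNormE_logWitness_lt_top`), while `∫ y ^ (-α) f y dy` over any
neighbourhood of `0` becomes `∫_T^∞ dt / t = ∞`. As `|x - y| ^ (-λ) ≥ x ^ (-λ)` for `0 < y < x`,
the operator sends `f` to the constant `∞` (`cesaroHardyE_logWitness`), whose `L_q` norm is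
infinite for every `q > 0`.
-/

open MeasureTheory Set ENNReal

/-- The generalized Cesàro–Hardy operator for `[0,∞]`-valued functions. -/
noncomputable def cesaroHardyE (α β lam : ℝ) (f : ℝ → ℝ≥0∞) (x : ℝ) : ℝ≥0∞ :=
  ENNReal.ofReal (x ^ (-β)) *
    ∫⁻ y in Ioo (0 : ℝ) x,
      ENNReal.ofReal (y ^ (-α)) * f y * ENNReal.ofReal (|x - y| ^ (-lam))

/-- The `L_r((0,∞))` norm of a `[0,∞]`-valued function (value `+∞` allowed). -/
noncomputable def lqNormE (r : ℝ) (g : ℝ → ℝ≥0∞) : ℝ≥0∞ :=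
  (∫⁻ x in Ioi (0 : ℝ), g x ^ r) ^ (1 / r)

/-- The function `y ^ (α - 1) / |log y|` on `(0, e⁻¹)`, extended by zero. -/
noncomputable def logWitness (α : ℝ) : ℝ → ℝ≥0∞ :=
  (Ioo (0 : ℝ) (Real.exp (-1))).indicator
    fun y => ENNReal.ofReal (y ^ (α - 1) * (-Real.log y)⁻¹)

lemma measurable_logWitness (α : ℝ) : Measurable (logWitness α) := by
  unfold logWitness
  exact Measurable.indicator (by fun_prop) measurableSet_Ioo

lemma logWitness_exp_neg (α : ℝ) {t : ℝ} (ht : 1 < t) :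
    logWitness α (Real.exp (-t)) = ENNReal.ofReal (Real.exp ((1 - α) * t) * t⁻¹) := by
  have hmem : Real.exp (-t) ∈ Ioo (0 : ℝ) (Real.exp (-1)) :=
    ⟨Real.exp_pos _, Real.exp_lt_exp.2 (by linarith)⟩
  rw [logWitness, indicator_of_mem hmem, Real.log_exp, ← Real.exp_mul, neg_neg]
  congr 3
  ring

/-- The substitution `y = exp (-t)`. -/
lemma lintegral_Ioo_exp_neg (T : ℝ) (g : ℝ → ℝ≥0∞) :
    ∫⁻ y in Ioo (0 : ℝ) (Real.exp (-T)), g y =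
      ∫⁻ t in Ioi T, ENNReal.ofReal (Real.exp (-t)) * g (Real.exp (-t)) := by
  have himg : (fun t : ℝ => Real.exp (-t)) '' Ioi T = Ioo 0 (Real.exp (-T)) := by
    ext y
    constructor
    · rintro ⟨t, ht, rfl⟩
      exact ⟨Real.exp_pos _, Real.exp_lt_exp.2 (neg_lt_neg ht)⟩
    · rintro ⟨h0, h1⟩
      refine ⟨-Real.log y, ?_, by simp [Real.exp_log h0]⟩
      have := (Real.log_lt_iff_lt_exp h0).2 h1
      simp only [mem_Ioi]
      linarith
  have hderiv : ∀ t ∈ Ioi T, HasDerivWithinAt (fun t : ℝ => Real.exp (-t))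
      (Real.exp (-t) * -1) (Ioi T) t := fun t _ =>
    ((hasDerivAt_neg t).exp).hasDerivWithinAt
  have hinj : InjOn (fun t : ℝ => Real.exp (-t)) (Ioi T) := fun a _ b _ hab =>
    neg_injective (Real.exp_injective hab)
  rw [← himg, lintegral_image_eq_lintegral_abs_deriv_mul measurableSet_Ioi hderiv hinj]
  simp [abs_of_pos, Real.exp_pos]

lemma lintegral_Ioi_inv {T : ℝ} (hT : 0 < T) :
    ∫⁻ t in Ioi T, ENNReal.ofReal t⁻¹ = ⊤ := by
  by_contra h
  have hint : IntegrableOn (fun t : ℝ => t⁻¹) (Ioi T) := by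
    refine (lintegral_ofReal_ne_top_iff_integrable (by fun_prop) ?_).1 h
    exact (ae_restrict_iff' measurableSet_Ioi).2
      (.of_forall fun t ht => inv_nonneg.2 (hT.trans ht).le)
  have := (integrableOn_Ioi_rpow_iff (s := -1) hT).1 (by simpa only [Real.rpow_neg_one] using hint)
  exact lt_irrefl _ this

lemma lqNormE_logWitness_lt_top {α p : ℝ} (hα : α < 1) (hp : 1 < p) (hpm : p ≤ 1 / (1 - α)) :
    lqNormE p (logWitness α) < ⊤ := by
  have hp0 : 0 < p := by linarith
  have hpα : (1 - α) * p ≤ 1 := by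
    rwa [le_div_iff₀ (by linarith), mul_comm] at hpm
  refine ENNReal.rpow_lt_top_of_nonneg (by positivity) (ne_of_lt ?_)
  have hsupp : ∫⁻ x in Ioi (0 : ℝ), logWitness α x ^ p =
      ∫⁻ x in Ioo (0 : ℝ) (Real.exp (-1)), logWitness α x ^ p := by
    have hind : (fun x => logWitness α x ^ p) =
        (Ioo (0 : ℝ) (Real.exp (-1))).indicator fun x => logWitness α x ^ p := by
      refine (indicator_eq_self.2 fun x hx => ?_).symm
      by_contra hx'
      exact hx (by simp [logWitness, hx', hp0])
    rw [hind, setLIntegral_indicator measurableSet_Ioo,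
      inter_eq_left.2 Ioo_subset_Ioi_self, ← hind]
  rw [hsupp, lintegral_Ioo_exp_neg]
  have hint : IntegrableOn (fun t : ℝ => t ^ (-p)) (Ioi 1) :=
    integrableOn_Ioi_rpow_of_lt (by linarith) one_pos
  refine lt_of_le_of_lt (setLIntegral_mono' measurableSet_Ioi fun t ht => ?_)
    hint.lintegral_lt_top
  have ht1 : (1 : ℝ) < t := ht
  have ht0 : 0 < t := one_pos.trans ht1
  rw [logWitness_exp_neg α ht1, ENNReal.ofReal_rpow_of_nonneg (by positivity) hp0.le,
    ← ENNReal.ofReal_mul (by positivity)]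
  refine ENNReal.ofReal_le_ofReal ?_
  rw [Real.mul_rpow (by positivity) (by positivity), ← Real.exp_mul, Real.inv_rpow ht0.le,
    ← Real.rpow_neg ht0.le, ← mul_assoc, ← Real.exp_add]
  refine mul_le_of_le_one_left (by positivity) (Real.exp_le_one_iff.2 ?_)
  nlinarith

/-- The operator maps the witness to `∞` at every point of `(0, ∞)`. -/
lemma cesaroHardyE_logWitness {α lam : ℝ} (β : ℝ) (hlam : 0 < lam) {x : ℝ} (hx : 0 < x) :
    cesaroHardyE α β lam (logWitness α) x = ⊤ := by
  have hβ : ENNReal.ofReal (x ^ (-β)) ≠ 0 := (ENNReal.ofReal_pos.2 (by positivity)).ne'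
  have hc : ENNReal.ofReal (x ^ (-lam)) ≠ 0 := (ENNReal.ofReal_pos.2 (by positivity)).ne'
  rw [cesaroHardyE]
  suffices h : ∫⁻ y in Ioo (0 : ℝ) x, ENNReal.ofReal (y ^ (-α)) * logWitness α y *
      ENNReal.ofReal (|x - y| ^ (-lam)) = ⊤ by rw [h, ENNReal.mul_top hβ]
  -- `T` is large enough that `exp (-T)` is below both `x` and the edge of the support.
  set T : ℝ := max 1 (-Real.log x)
  have hT1 : 1 ≤ T := le_max_left _ _
  have hTx : Real.exp (-T) ≤ x := by
    rw [← Real.le_log_iff_exp_le hx]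
    linarith [le_max_right 1 (-Real.log x)]
  refine top_le_iff.1 (le_trans ?_ (lintegral_mono_set (Ioo_subset_Ioo_right hTx)))
  rw [lintegral_Ioo_exp_neg]
  have htop : ∫⁻ t in Ioi T, ENNReal.ofReal (x ^ (-lam)) * ENNReal.ofReal t⁻¹ = ⊤ := by
    rw [lintegral_const_mul _ (by fun_prop), lintegral_Ioi_inv (by linarith), ENNReal.mul_top hc]
  rw [← htop]
  refine setLIntegral_mono' measurableSet_Ioi fun t ht => ?_
  have htT : T < t := ht
  have ht1 : 1 < t := by linarith
  have ht0 : 0 < t := by linarith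
  have hlt : Real.exp (-t) < x :=
    (Real.exp_lt_exp.2 (by linarith)).trans_le hTx
  have hker : x ^ (-lam) ≤ |x - Real.exp (-t)| ^ (-lam) := by
    rw [abs_of_pos (sub_pos.2 hlt)]
    exact Real.rpow_le_rpow_of_nonpos (sub_pos.2 hlt) (by linarith [Real.exp_pos (-t)])
      (by linarith)
  rw [logWitness_exp_neg α ht1, ← ENNReal.ofReal_mul (by positivity),
    ← ENNReal.ofReal_mul (by positivity), ← ENNReal.ofReal_mul (by positivity),
    ← ENNReal.ofReal_mul (by positivity)]
  refine ENNReal.ofReal_le_ofReal ?_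
  have hcancel : Real.exp (-t) * (Real.exp (-t) ^ (-α) * (Real.exp ((1 - α) * t) * t⁻¹)) =
      t⁻¹ := by
    rw [← Real.exp_mul, ← mul_assoc, ← mul_assoc, ← Real.exp_add, ← Real.exp_add,
      show -t + -t * -α + (1 - α) * t = 0 by ring, Real.exp_zero, one_mul]
  rw [← mul_assoc, hcancel, mul_comm]
  gcongr

/-- Lemma 2.2, unboundedness for `1 < p ≤ p₋ = 1/(1-α)`: with `q` given by
`1 + 1/q = 1/p + κ`, there is a nonnegative `f ∈ L_p((0,∞))` with
`‖U[f]‖_q = +∞`; hence no finite constant `K` satisfies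
`‖U[g]‖_q ≤ K ‖g‖_p` for all `g ∈ L_p((0,∞))`. -/
theorem cesaroHardy_unbounded_below_pminus
    (α β lam : ℝ) (hα : α ∈ Ioo (0 : ℝ) 1) (hβ : β ∈ Ioo (0 : ℝ) 1)
    (hlam : lam ∈ Ioo (0 : ℝ) 1) (hκ : α + β + lam < 1)
    (p : ℝ) (hp : 1 < p) (hpm : p ≤ 1 / (1 - α)) :
    (∃ f : ℝ → ℝ≥0∞, Measurable f ∧ lqNormE p f < ⊤ ∧
        lqNormE (1 / (1 / p + (α + β + lam) - 1)) (cesaroHardyE α β lam f) = ⊤) ∧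
    ¬ ∃ K : ℝ≥0∞, K < ⊤ ∧
        ∀ g : ℝ → ℝ≥0∞, Measurable g → lqNormE p g < ⊤ →
          lqNormE (1 / (1 / p + (α + β + lam) - 1)) (cesaroHardyE α β lam g)
            ≤ K * lqNormE p g := by
  obtain ⟨hα0, hα1⟩ := hα
  have hq : 0 < 1 / (1 / p + (α + β + lam) - 1) := by
    have h1α : 0 < 1 - α := by linarith
    have : 1 - α ≤ 1 / p := by
      rw [le_div_iff₀ (by linarith), mul_comm]
      exact (le_div_iff₀ h1α).1 hpm
    exact one_div_pos.2 (by linarith [hβ.1, hlam.1])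
  have hfin := lqNormE_logWitness_lt_top hα1 hp hpm
  have hinf : lqNormE (1 / (1 / p + (α + β + lam) - 1))
      (cesaroHardyE α β lam (logWitness α)) = ⊤ := by
    rw [lqNormE, setLIntegral_congr_fun measurableSet_Ioi (g := fun _ => ⊤) fun x hx => by
      simp only [cesaroHardyE_logWitness β hlam.1 hx, ENNReal.top_rpow_of_pos hq]]
    rw [setLIntegral_const, Real.volume_Ioi, ENNReal.top_mul_top,
      ENNReal.top_rpow_of_pos (one_div_pos.2 hq)]
  refine ⟨⟨_, measurable_logWitness α, hfin, hinf⟩, ?_⟩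
  rintro ⟨K, hK, h⟩
  have hle := h _ (measurable_logWitness α) hfin
  rw [hinf] at hle
  exact (ENNReal.mul_lt_top hK hfin).not_ge hle
end

section
/- Let f₀(x) = x^{−(1−α)} for x ≥ 1 and f₀(x) = 0 for x ∈ (0,1). Then for every x > 1 one has the pointwise lower bound U[f₀](x) ≥ x^{−(β+λ)} · log x. -/
/-!
The integrand defining `U[f₀](x)` vanishes for `y < 1` and equals `y⁻¹ (x - y)^(-λ)` for
`1 ≤ y < x`. There `0 < x - y ≤ x`, so `(x - y)^(-λ) ≥ x^(-λ)`, and integrating `y⁻¹ x^(-λ)`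
over `(1, x)` gives `x^(-λ) log x`. As the Bochner integral of a non-integrable function is `0`,
this comparison also needs integrability near the singularity `y = x`
(`cesaroHardy_integrand_integrableOn`), which holds because `λ < 1`.
-/

open MeasureTheory Set

/-- On `[1, ∞)` the weight `y^(-α)` and the decay of `f₀` combine to exactly `y⁻¹`. -/
lemma rpow_neg_mul_rpow_neg_one_sub (α : ℝ) {y : ℝ} (hy : 0 < y) :
    y ^ (-α) * y ^ (-(1 - α)) = y⁻¹ := by
  rw [← Real.rpow_add hy, ← Real.rpow_neg_one]
  congr 1
  ring

/-- The integrand is dominated on `(0, x)` by `|x - y|^(-λ)`, which is integrable as `λ < 1`. -/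
lemma cesaroHardy_integrand_integrableOn (α lam : ℝ) (hlam : lam < 1) (f₀ : ℝ → ℝ)
    (hf₀ : ∀ x : ℝ, f₀ x = if 1 ≤ x then x ^ (-(1 - α)) else 0) {x : ℝ} (hx : 0 ≤ x) :
    IntegrableOn (fun y : ℝ => y ^ (-α) * f₀ y * |x - y| ^ (-lam)) (Ioo 0 x) := by
  have hdom : IntegrableOn (fun y : ℝ => |x - y| ^ (-lam)) (Ioo 0 x) := by
    have h := (intervalIntegral.intervalIntegrable_rpow' (a := 0) (b := x)
      (r := -lam) (by linarith)).comp_sub_left x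
    rw [sub_zero, sub_self] at h
    have h' := (intervalIntegrable_iff_integrableOn_Ioo_of_le hx).1 h.symm
    refine h'.congr_fun (fun y hy => ?_) measurableSet_Ioo
    simp only
    rw [abs_of_pos (sub_pos.2 hy.2)]
  have hmeas : Measurable f₀ := by
    rw [funext hf₀]
    exact Measurable.ite measurableSet_Ici (by fun_prop) measurable_const
  refine Integrable.mono' hdom (by fun_prop) ?_
  refine (ae_restrict_iff' measurableSet_Ioo).2 (Filter.Eventually.of_forall fun y hy => ?_)
  have hk : 0 ≤ |x - y| ^ (-lam) := Real.rpow_nonneg (abs_nonneg _) _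
  rw [hf₀]
  split_ifs with h1
  · rw [rpow_neg_mul_rpow_neg_one_sub α hy.1, Real.norm_of_nonneg
      (mul_nonneg (inv_nonneg.2 hy.1.le) hk)]
    exact mul_le_of_le_one_left hk (inv_le_one_of_one_le₀ h1)
  · simpa using hk

/-- For `f₀(x) = x^(-(1-α))` for `x ≥ 1` (and `0` on `(0,1)`), one has the
pointwise lower bound `U[f₀](x) ≥ x^(-(β+λ)) log x` for every `x > 1`. -/
theorem cesaroHardy_f0_pointwise_lower_bound
    (α β lam : ℝ) (hα : α ∈ Ioo (0 : ℝ) 1) (hβ : β ∈ Ioo (0 : ℝ) 1)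
    (hlam : lam ∈ Ioo (0 : ℝ) 1) (hκ : α + β + lam < 1)
    (f₀ : ℝ → ℝ)
    (hf₀ : ∀ x : ℝ, f₀ x = if 1 ≤ x then x ^ (-(1 - α)) else 0) :
    ∀ x : ℝ, 1 < x →
      x ^ (-(β + lam)) * Real.log x ≤ cesaroHardy α β lam f₀ x := by
  intro x hx
  have hx0 : 0 < x := by linarith
  have hint := cesaroHardy_integrand_integrableOn α lam hlam.2 f₀ hf₀ hx0.le
  have hsub : Ioo 1 x ⊆ Ioo 0 x := Ioo_subset_Ioo_left zero_le_one
  have hlog : ∫ y in Ioo 1 x, y⁻¹ * x ^ (-lam) = Real.log x * x ^ (-lam) := by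
    rw [integral_mul_const, ← integral_Ioc_eq_integral_Ioo,
      ← intervalIntegral.integral_of_le hx.le, integral_inv_of_pos one_pos hx0, div_one]
  have hinv : IntegrableOn (fun y : ℝ => y⁻¹ * x ^ (-lam)) (Ioo 1 x) := by
    refine IntegrableOn.mono_set (ContinuousOn.integrableOn_Icc ?_) Ioo_subset_Icc_self
    exact (continuousOn_id.inv₀ fun y hy => (zero_lt_one.trans_le hy.1).ne').mul
      continuousOn_const
  have hmain : Real.log x * x ^ (-lam) ≤
      ∫ y in Ioo (0 : ℝ) x, y ^ (-α) * f₀ y * |x - y| ^ (-lam) := by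
    rw [← hlog]
    refine (setIntegral_mono_on hinv (hint.mono_set hsub) measurableSet_Ioo
      fun y hy => ?_).trans (setIntegral_mono_set hint ?_ hsub.eventuallyLE)
    · have hy0 : 0 < y := zero_lt_one.trans hy.1
      rw [hf₀, if_pos hy.1.le, rpow_neg_mul_rpow_neg_one_sub α hy0,
        abs_of_pos (sub_pos.2 hy.2)]
      exact mul_le_mul_of_nonneg_left (Real.rpow_le_rpow_of_nonpos (sub_pos.2 hy.2)
        (by linarith) (by linarith [hlam.1])) (inv_nonneg.2 hy0.le)
    · refine (ae_restrict_iff' measurableSet_Ioo).2 (Filter.Eventually.of_forall fun y hy => ?_)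
      have hf : 0 ≤ f₀ y := by
        rw [hf₀]
        split_ifs
        · exact Real.rpow_nonneg hy.1.le _
        · exact le_rfl
      exact mul_nonneg (mul_nonneg (Real.rpow_nonneg hy.1.le _) hf)
        (Real.rpow_nonneg (abs_nonneg _) _)
  calc x ^ (-(β + lam)) * Real.log x = x ^ (-β) * (Real.log x * x ^ (-lam)) := by
        rw [neg_add, Real.rpow_add hx0]
        ring
    _ ≤ cesaroHardy α β lam f₀ x :=
        mul_le_mul_of_nonneg_left hmain (Real.rpow_nonneg hx0.le _)
end

section
/- Let f₀(x) = x^{−(1−α)} for x ≥ 1 and f₀(x) = 0 for x ∈ (0,1). Then for every q > q_− = 1/(β+λ), one has ‖U[f₀]‖_q ≥ Γ(q+1)^{1/q} / (q(β+λ) − 1)^{1 + 1/q}, where Γ denotes the Gamma function. -/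
/-!
For `x > 1` the factor `y ^ (-α) * f₀ y` is `y⁻¹` on `[1, x)` and vanishes on `(0, 1)`, while
`|x - y| ^ (-λ) ≥ x ^ (-λ)` since `0 < x - y < x` and `λ > 0`. Hence
`U[f₀](x) ≥ x ^ (-(β + λ)) * log x` (`cesaroHardy_f0_ge`). The `L_q((1, ∞))` norm of this lower
bound is explicit: the substitution `x = exp t` turns `∫₁^∞ (x ^ (-(β + λ)) log x) ^ q dx` into the
Gamma integral `∫₀^∞ t ^ q exp (-(q (β + λ) - 1) t) dt = Γ(q + 1) / (q (β + λ) - 1) ^ (q + 1)`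
(`lintegral_rpow_mul_log_rpow`), whose `q`-th root is the claimed constant.
-/

open MeasureTheory Set

/-- The kernel singularity at `y = x` is integrable since `lam < 1`. This is needed because the
Bochner integral in `cesaroHardy` would otherwise be the junk value `0`. -/
lemma integrableOn_abs_sub_rpow {lam : ℝ} (h1 : lam < 1) {x : ℝ} (hx : 0 < x) :
    IntegrableOn (fun y : ℝ => |x - y| ^ (-lam)) (Ioo 0 x) := by
  have h : IntervalIntegrable (fun y : ℝ => y ^ (-lam)) volume 0 x :=
    intervalIntegral.intervalIntegrable_rpow' (by linarith)
  have h2 := (h.comp_sub_left x).symm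
  simp only [sub_self, sub_zero] at h2
  rw [intervalIntegrable_iff_integrableOn_Ioo_of_le hx.le] at h2
  refine h2.congr_fun (fun y hy => ?_) measurableSet_Ioo
  simp only [abs_of_pos (sub_pos.2 hy.2)]

lemma cesaroHardy_f0_ge {α β lam : ℝ} (hlam : lam ∈ Ioo (0 : ℝ) 1) {f₀ : ℝ → ℝ}
    (hf₀ : ∀ x : ℝ, f₀ x = if 1 ≤ x then x ^ (-(1 - α)) else 0) {x : ℝ} (hx : 1 < x) :
    x ^ (-(β + lam)) * Real.log x ≤ cesaroHardy α β lam f₀ x := by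
  have hx0 : 0 < x := by linarith
  have hF : ∀ y : ℝ, y ^ (-α) * f₀ y * |x - y| ^ (-lam)
      = if 1 ≤ y then y⁻¹ * |x - y| ^ (-lam) else 0 := by
    intro y
    rw [hf₀]
    split_ifs with h
    · rw [← Real.rpow_add (by linarith), show -α + -(1 - α) = -1 by ring, Real.rpow_neg_one]
    · simp
  unfold cesaroHardy
  simp only [hF]
  set F : ℝ → ℝ := fun y => if 1 ≤ y then y⁻¹ * |x - y| ^ (-lam) else 0 with hFdef
  have hFm : Measurable F := by
    refine Measurable.ite measurableSet_Ici ?_ measurable_const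
    fun_prop
  have hF0 : ∀ y, 0 ≤ F y := by
    intro y
    simp only [hFdef]
    split_ifs with h
    · positivity
    · exact le_rfl
  have hFi : IntegrableOn F (Ioo 0 x) := by
    refine (integrableOn_abs_sub_rpow hlam.2 hx0).mono' hFm.aestronglyMeasurable
      (Filter.Eventually.of_forall fun y => ?_)
    rw [Real.norm_of_nonneg (hF0 y)]
    simp only [hFdef]
    split_ifs with h
    · exact mul_le_of_le_one_left (by positivity) (inv_le_one_of_one_le₀ h)
    · positivity
  have hsub : Ioo 1 x ⊆ Ioo 0 x := Ioo_subset_Ioo_left zero_le_one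
  have hinv : IntegrableOn (fun y : ℝ => y⁻¹) (Ioo 1 x) := by
    refine (ContinuousOn.integrableOn_Icc ?_).mono_set Ioo_subset_Icc_self
    exact continuousOn_inv₀.mono fun y hy => ne_of_gt (lt_of_lt_of_le one_pos hy.1)
  have hlog : ∫ y in Ioo 1 x, y⁻¹ * x ^ (-lam) = Real.log x * x ^ (-lam) := by
    rw [integral_mul_const, ← integral_Ioc_eq_integral_Ioo,
      ← intervalIntegral.integral_of_le hx.le, integral_inv_of_pos one_pos hx0, div_one]
  have hmain : Real.log x * x ^ (-lam) ≤ ∫ y in Ioo 0 x, F y := by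
    rw [← hlog]
    calc ∫ y in Ioo 1 x, y⁻¹ * x ^ (-lam) ≤ ∫ y in Ioo 1 x, F y := by
          refine setIntegral_mono_on (hinv.mul_const _) (hFi.mono_set hsub) measurableSet_Ioo
            fun y hy => ?_
          have hxy : 0 < x - y := sub_pos.2 hy.2
          simp only [hFdef, if_pos hy.1.le, abs_of_pos hxy]
          refine mul_le_mul_of_nonneg_left ?_ (inv_nonneg.2 (by linarith [hy.1]))
          exact Real.rpow_le_rpow_of_nonpos hxy (by linarith [hy.1]) (by linarith [hlam.1])
      _ ≤ ∫ y in Ioo 0 x, F y :=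
          setIntegral_mono_set hFi (Filter.Eventually.of_forall hF0) hsub.eventuallyLE
  calc x ^ (-(β + lam)) * Real.log x = x ^ (-β) * (Real.log x * x ^ (-lam)) := by
        rw [neg_add, Real.rpow_add hx0]; ring
    _ ≤ _ := mul_le_mul_of_nonneg_left hmain (by positivity)

/-- The `q`-th power of the `L_q((1, ∞))` norm of `x ^ (-s) * log x`, computed via `x = exp t`. -/
lemma lintegral_rpow_mul_log_rpow {s q : ℝ} (hq : 0 < q) (hsq : 0 < q * s - 1) :
    ∫⁻ x in Ioi (1 : ℝ), ENNReal.ofReal ((x ^ (-s) * Real.log x) ^ q)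
      = ENNReal.ofReal (Real.Gamma (q + 1) / (q * s - 1) ^ (q + 1)) := by
  have himg : Real.exp '' Ioi 0 = Ioi 1 := by
    ext y
    constructor
    · rintro ⟨t, ht, rfl⟩
      exact Real.one_lt_exp_iff.2 ht
    · intro hy
      exact ⟨Real.log y, Real.log_pos hy, Real.exp_log (lt_trans one_pos hy)⟩
  have hG := Real.integral_rpow_mul_exp_neg_mul_Ioi (a := q + 1) (by linarith) hsq
  rw [add_sub_cancel_right] at hG
  have hval : (1 / (q * s - 1)) ^ (q + 1) * Real.Gamma (q + 1)
      = Real.Gamma (q + 1) / (q * s - 1) ^ (q + 1) := by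
    rw [Real.div_rpow zero_le_one hsq.le, Real.one_rpow]; ring
  rw [hval] at hG
  have hpos : 0 < Real.Gamma (q + 1) / (q * s - 1) ^ (q + 1) :=
    div_pos (Real.Gamma_pos_of_pos (by linarith)) (Real.rpow_pos_of_pos hsq _)
  have hint := Integrable.of_integral_ne_zero (hG.trans_ne hpos.ne')
  rw [← himg, lintegral_image_eq_lintegral_abs_deriv_mul measurableSet_Ioi
    (fun t _ => (Real.hasDerivAt_exp t).hasDerivWithinAt) Real.exp_injective.injOn, ← hG,
    ofReal_integral_eq_lintegral_ofReal hint]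
  · refine setLIntegral_congr_fun measurableSet_Ioi fun t ht => ?_
    have ht0 : (0 : ℝ) ≤ t := le_of_lt ht
    simp only [abs_of_pos (Real.exp_pos t), Real.log_exp]
    rw [← ENNReal.ofReal_mul (Real.exp_pos t).le, Real.mul_rpow (by positivity) ht0,
      ← Real.exp_mul, ← Real.exp_mul, ← mul_assoc, ← Real.exp_add, mul_comm]
    congr 3
    ring
  · filter_upwards [ae_restrict_mem measurableSet_Ioi] with t ht
    have ht0 : (0 : ℝ) ≤ t := le_of_lt ht
    simp only [Pi.zero_apply]
    positivity

/-- For `f₀(x) = x^(-(1-α))` for `x ≥ 1` (and `0` on `(0,1)`), and every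
`q > q₋ = 1/(β+λ)`, one has
`‖U[f₀]‖_q ≥ Γ(q+1)^(1/q) / (q(β+λ) - 1)^(1 + 1/q)`. -/
theorem cesaroHardy_f0_lq_lower_bound
    (α β lam : ℝ) (hα : α ∈ Ioo (0 : ℝ) 1) (hβ : β ∈ Ioo (0 : ℝ) 1)
    (hlam : lam ∈ Ioo (0 : ℝ) 1) (hκ : α + β + lam < 1)
    (f₀ : ℝ → ℝ)
    (hf₀ : ∀ x : ℝ, f₀ x = if 1 ≤ x then x ^ (-(1 - α)) else 0)
    (q : ℝ) (hq : 1 / (β + lam) < q) :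
    ENNReal.ofReal
        (Real.Gamma (q + 1) ^ (1 / q) / (q * (β + lam) - 1) ^ (1 + 1 / q))
      ≤ eLpNorm (cesaroHardy α β lam f₀) (ENNReal.ofReal q)
          (volume.restrict (Ioi 0)) := by
  have hs : 0 < β + lam := add_pos hβ.1 hlam.1
  have hq0 : 0 < q := lt_trans (one_div_pos.2 hs) hq
  have hsq : 0 < q * (β + lam) - 1 := sub_pos.2 ((div_lt_iff₀ hs).1 hq)
  have hΓ : 0 < Real.Gamma (q + 1) := Real.Gamma_pos_of_pos (by linarith)
  rw [eLpNorm_eq_lintegral_rpow_enorm_toReal (ENNReal.ofReal_pos.2 hq0).ne' ENNReal.ofReal_ne_top,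
    ENNReal.toReal_ofReal hq0.le]
  have hC : Real.Gamma (q + 1) ^ (1 / q) / (q * (β + lam) - 1) ^ (1 + 1 / q)
      = (Real.Gamma (q + 1) / (q * (β + lam) - 1) ^ (q + 1)) ^ (1 / q) := by
    rw [Real.div_rpow hΓ.le (by positivity), ← Real.rpow_mul hsq.le]
    congr 2
    field_simp
  rw [hC, ← ENNReal.ofReal_rpow_of_nonneg (by positivity) (by positivity),
    ← lintegral_rpow_mul_log_rpow hq0 hsq]
  refine ENNReal.rpow_le_rpow ?_ (by positivity)
  calc ∫⁻ x in Ioi (1 : ℝ), ENNReal.ofReal ((x ^ (-(β + lam)) * Real.log x) ^ q)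
      ≤ ∫⁻ x in Ioi (1 : ℝ), ‖cesaroHardy α β lam f₀ x‖ₑ ^ q := by
        refine setLIntegral_mono' measurableSet_Ioi fun x hx => ?_
        have hx1 : (1 : ℝ) < x := hx
        have h0 : 0 ≤ x ^ (-(β + lam)) * Real.log x :=
          mul_nonneg (Real.rpow_nonneg (by linarith) _) (Real.log_nonneg hx1.le)
        have hle := cesaroHardy_f0_ge (β := β) hlam hf₀ hx1
        rw [← ENNReal.ofReal_rpow_of_nonneg h0 hq0.le, Real.enorm_of_nonneg (h0.trans hle)]
        exact ENNReal.rpow_le_rpow (ENNReal.ofReal_le_ofReal hle) hq0.le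
    _ ≤ ∫⁻ x in Ioi (0 : ℝ), ‖cesaroHardy α β lam f₀ x‖ₑ ^ q :=
        lintegral_mono_set (Ioi_subset_Ioi zero_le_one)
end

section
/- (Theorem 3.1 B, upper bound, two-dimensional case.) There is a finite constant C = C(α₁,α₂,β₁,β₂,λ₁,λ₂) > 0 such that for all p₁ ∈ (p_−^{(1)}, p_+^{(1)}] and p₂ ∈ (p_−^{(2)}, p_+^{(2)}], with q_j defined by 1 + 1/q_j = 1/p_j + κ_j (j = 1,2), every measurable f : (0,∞)² → ℝ with ‖f‖_{p₁,p₂} < ∞ satisfies ‖U₂[f]‖_{q₁,q₂} ≤ C · (p₁ − p_−^{(1)})^{−κ₁} (p₂ − p_−^{(2)})^{−κ₂} · ‖f‖_{p₁,p₂}. -/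
/-!
Fix one pair of parameters and write `κ = α + β + λ`. The kernel
`x^(-β) y^(-α) (x-y)^(-λ) 1_{y<x}` is homogeneous of degree `-κ`, so in the logarithmic
coordinates `x = e^t`, `y = e^s`, after weighting by `e^(t/q)` and `e^(s/p)`, the one-dimensional
operator becomes the convolution on `ℝ` with
`φ(u) = e^(c u) (1 - e^u)^(-λ) 1_{u<0}`, where `c = 1 - 1/p - α`. Young's inequality with exponent
`r = 1/κ` bounds its norm from `L^p` to `L^q` by `‖φ‖_r`, and `‖φ‖_r^r` is the Beta integral
`B(c/κ, 1 - λ/κ)`, which is `O(1/c) = O(1/(p - p₋))` with `p₋ = 1/(1-α)`. Taking the power `1/r = κ` produces exactly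
the factor `(p - p₋)^(-κ)` (`cesaro_one_dim`, `cesaro_one_dim_uniform`).

In two dimensions `|U₂ f|` is dominated by the iterated nonnegative integral
(`ofReal_abs_cesaroHardy2_le`). Minkowski's integral inequality (`lintegral_minkowski`) moves the
inner `L^{q₁}` norm in `x₁` inside the `y₂` integral, and the one-dimensional estimate is then
applied first in `x₁` and afterwards in `x₂`.
-/

open MeasureTheory Set ENNReal

/-- The two-dimensional generalized Cesàro–Hardy operator
`U₂[f](x₁,x₂) = x₁^(-β₁) x₂^(-β₂) ∫₀^{x₁} ∫₀^{x₂}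
  y₁^(-α₁) y₂^(-α₂) f(y₁,y₂) |x₁-y₁|^(-λ₁) |x₂-y₂|^(-λ₂) dy₂ dy₁`. -/
noncomputable def cesaroHardy2 (α₁ α₂ β₁ β₂ lam₁ lam₂ : ℝ)
    (f : ℝ → ℝ → ℝ) (x₁ x₂ : ℝ) : ℝ :=
  x₁ ^ (-β₁) * x₂ ^ (-β₂) *
    ∫ y₁ in Ioo (0 : ℝ) x₁, ∫ y₂ in Ioo (0 : ℝ) x₂,
      y₁ ^ (-α₁) * y₂ ^ (-α₂) * f y₁ y₂ *
        |x₁ - y₁| ^ (-lam₁) * |x₂ - y₂| ^ (-lam₂)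

/-- The anisotropic (mixed-norm) Lebesgue norm
`‖f‖_{r₁,r₂} = (∫₀^∞ (∫₀^∞ |f(x₁,x₂)|^{r₁} dx₁)^{r₂/r₁} dx₂)^{1/r₂}`
(inner integral in `x₁`, outer in `x₂`), with value `+∞` allowed. -/
noncomputable def mixedNorm (r₁ r₂ : ℝ) (f : ℝ → ℝ → ℝ) : ℝ≥0∞ :=
  (∫⁻ x₂ in Ioi (0 : ℝ),
      (∫⁻ x₁ in Ioi (0 : ℝ), ENNReal.ofReal |f x₁ x₂| ^ r₁) ^ (r₂ / r₁)) ^ (1 / r₂)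

/-! ### Minkowski and Young inequalities for nonnegative kernels -/

/-- Minkowski's integral inequality in `ℝ≥0∞`. With `N y` the `L^q` norm of `F · y`, Hölder is
applied in `y` to `F = (F^q N^(1-q))^(1/q) * N^(1-1/q)`, and Tonelli finishes the proof. -/
theorem lintegral_minkowski {X Y : Type*} [MeasurableSpace X] [MeasurableSpace Y]
    {μ : Measure X} {ν : Measure Y} [SFinite μ] [SigmaFinite ν] {F : X → Y → ℝ≥0∞}
    (hF : Measurable (Function.uncurry F)) {q : ℝ} (hq : 1 < q) :
    (∫⁻ x, (∫⁻ y, F x y ∂ν) ^ q ∂μ) ^ (1 / q) ≤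
      ∫⁻ y, (∫⁻ x, F x y ^ q ∂μ) ^ (1 / q) ∂ν := by
  have hq0 : 0 < q := by linarith
  set N : Y → ℝ≥0∞ := fun y => (∫⁻ x, F x y ^ q ∂μ) ^ (1 / q) with hN
  have hNm : Measurable N :=
    (Measurable.lintegral_prod_left (f := fun x y => F x y ^ q) (hF.pow_const q)).pow_const _
  by_cases hNt : ∫⁻ y, N y ∂ν = ∞
  · rw [hNt]; exact le_top
  -- `N` may vanish, making `N ^ (1 - q)` infinite, so it is replaced by `M = N + w` with `w > 0`
  -- of integral less than `ε`.
  refine ENNReal.le_of_forall_pos_le_add fun ε hε _ => ?_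
  obtain ⟨w, hw0, hwm, hwε⟩ := exists_pos_lintegral_lt_of_sigmaFinite ν
    (ε := (ε : ℝ≥0∞)) (by exact_mod_cast hε.ne')
  set M : Y → ℝ≥0∞ := fun y => N y + w y with hM
  have hMm : Measurable M := hNm.add hwm.coe_nnreal_ennreal
  have hMint : ∫⁻ y, M y ∂ν = ∫⁻ y, N y ∂ν + ∫⁻ y, w y ∂ν := lintegral_add_left hNm _
  have hM0 : ∀ y, M y ≠ 0 := fun y => by
    simp only [hM, ne_eq, add_eq_zero, not_and]
    intro _
    exact_mod_cast (hw0 y).ne'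
  have hMt : ∀ᵐ y ∂ν, M y ≠ ∞ := by
    filter_upwards [ae_lt_top hNm hNt] with y hy
    simp only [hM]
    exact ENNReal.add_ne_top.2 ⟨hy.ne, ENNReal.coe_ne_top⟩
  suffices h : ∫⁻ x, (∫⁻ y, F x y ∂ν) ^ q ∂μ ≤ (∫⁻ y, M y ∂ν) ^ q by
    calc _ ≤ ((∫⁻ y, M y ∂ν) ^ q) ^ (1 / q) := by gcongr
      _ = ∫⁻ y, M y ∂ν := by rw [← ENNReal.rpow_mul, mul_one_div_cancel hq0.ne', ENNReal.rpow_one]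
      _ ≤ _ := by rw [hMint]; gcongr
  have hGm : Measurable (Function.uncurry fun x y => F x y ^ q * M y ^ (1 - q)) :=
    (hF.pow_const q).mul ((hMm.comp measurable_snd).pow_const _)
  have key : ∀ x, (∫⁻ y, F x y ∂ν) ^ q ≤
      (∫⁻ y, F x y ^ q * M y ^ (1 - q) ∂ν) * (∫⁻ y, M y ∂ν) ^ (q - 1) := by
    intro x
    have h1 : ∫⁻ y, F x y ∂ν =
        ∫⁻ y, (F x y ^ q * M y ^ (1 - q)) ^ (1 / q) * M y ^ (1 - 1 / q) ∂ν := by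
      refine lintegral_congr_ae ?_
      filter_upwards [hMt] with y hy
      rw [ENNReal.mul_rpow_of_nonneg _ _ (by positivity), ← ENNReal.rpow_mul, ← ENNReal.rpow_mul,
        mul_assoc, ← ENNReal.rpow_add _ _ (hM0 y) hy, mul_one_div_cancel hq0.ne',
        show (1 - q) * (1 / q) + (1 - 1 / q) = 0 by field_simp; ring]
      simp
    have h2 := ENNReal.lintegral_mul_norm_pow_le (μ := ν) (p := 1 / q) (q := 1 - 1 / q)
      (hGm.of_uncurry_left (x := x)).aemeasurable hMm.aemeasurable (by positivity)
      (by rw [sub_nonneg, div_le_one hq0]; exact hq.le) (by ring)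
    rw [← h1] at h2
    calc _ ≤ _ := ENNReal.rpow_le_rpow h2 hq0.le
      _ = _ := by
        rw [ENNReal.mul_rpow_of_nonneg _ _ hq0.le, ← ENNReal.rpow_mul, ← ENNReal.rpow_mul,
          one_div_mul_cancel hq0.ne', ENNReal.rpow_one,
          show (1 - 1 / q) * q = q - 1 by field_simp]
  calc _ ≤ ∫⁻ x, (∫⁻ y, F x y ^ q * M y ^ (1 - q) ∂ν) * (∫⁻ y, M y ∂ν) ^ (q - 1) ∂μ :=
        lintegral_mono key
    _ = (∫⁻ x, (∫⁻ y, F x y ^ q * M y ^ (1 - q) ∂ν) ∂μ) * (∫⁻ y, M y ∂ν) ^ (q - 1) :=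
        lintegral_mul_const _ hGm.lintegral_prod_right
    _ = (∫⁻ y, (∫⁻ x, F x y ^ q * M y ^ (1 - q) ∂μ) ∂ν) * (∫⁻ y, M y ∂ν) ^ (q - 1) := by
        rw [lintegral_lintegral_swap hGm.aemeasurable]
    _ ≤ (∫⁻ y, M y ∂ν) * (∫⁻ y, M y ∂ν) ^ (q - 1) := by
        gcongr ?_ * _
        refine lintegral_mono_ae ?_
        filter_upwards [hMt] with y hy
        rw [lintegral_mul_const _ ((hF.of_uncurry_right (y := y)).pow_const q)]
        have : ∫⁻ x, F x y ^ q ∂μ = N y ^ q := by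
          simp only [hN]
          rw [← ENNReal.rpow_mul, one_div_mul_cancel hq0.ne', ENNReal.rpow_one]
        rw [this]
        calc N y ^ q * M y ^ (1 - q) ≤ M y ^ q * M y ^ (1 - q) := by
              gcongr; exact le_self_add
          _ = M y := by rw [← ENNReal.rpow_add _ _ (hM0 y) hy]; simp
    _ = _ := by
        nth_rewrite 1 [← ENNReal.rpow_one (∫⁻ y, M y ∂ν)]
        rw [← ENNReal.rpow_add_of_nonneg _ _ zero_le_one (by linarith)]
        congr 1; ring

/-- Young's inequality for a kernel whose `L^r` norms in each variable separately are at most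
`B ^ (1 / r)`; for a translation-invariant kernel on `ℝ` this is the convolution inequality. -/
theorem lintegral_schur_young {X Y : Type*} [MeasurableSpace X] [MeasurableSpace Y]
    {μ : Measure X} {ν : Measure Y} [SFinite μ] [SFinite ν] {Φ : X → Y → ℝ≥0∞} {G : Y → ℝ≥0∞}
    (hΦ : Measurable (Function.uncurry Φ)) (hG : Measurable G) {p q r : ℝ}
    (hp : 0 < p) (hq : 0 < q) (hr : 0 < r) (hpq : p ≤ q) (hrq : r ≤ q)
    (hpqr : 1 + 1 / q = 1 / p + 1 / r) {B : ℝ≥0∞}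
    (h₁ : ∀ x, ∫⁻ y, Φ x y ^ r ∂ν ≤ B) (h₂ : ∀ y, ∫⁻ x, Φ x y ^ r ∂μ ≤ B) :
    (∫⁻ x, (∫⁻ y, Φ x y * G y ∂ν) ^ q ∂μ) ^ (1 / q) ≤
      B ^ (1 / r) * (∫⁻ y, G y ^ p ∂ν) ^ (1 / p) := by
  set S := ∫⁻ y, G y ^ p ∂ν with hS
  have hrq' : 0 ≤ 1 / r - 1 / q := sub_nonneg.2 (one_div_le_one_div_of_le hr hrq)
  have hpq' : 0 ≤ 1 / p - 1 / q := sub_nonneg.2 (one_div_le_one_div_of_le hp hpq)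
  have hGm : Measurable (Function.uncurry fun x y => Φ x y ^ r * G y ^ p) :=
    (hΦ.pow_const r).mul ((hG.comp measurable_snd).pow_const _)
  have key : ∀ x, (∫⁻ y, Φ x y * G y ∂ν) ^ q ≤
      (∫⁻ y, Φ x y ^ r * G y ^ p ∂ν) * (B ^ (1 / r - 1 / q) * S ^ (1 / p - 1 / q)) ^ q := by
    intro x
    have hm := hΦ.of_uncurry_left (x := x)
    -- Hölder with the three exponents `1/q`, `1/r - 1/q`, `1/p - 1/q`, whose sum is `1`.
    have h3 := ENNReal.lintegral_prod_norm_pow_le (μ := ν) (Finset.univ : Finset (Fin 3))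
      (f := ![fun y => Φ x y ^ r * G y ^ p, fun y => Φ x y ^ r, fun y => G y ^ p])
      (p := ![1 / q, 1 / r - 1 / q, 1 / p - 1 / q])
      (by
        intro i _
        fin_cases i
        · exact (hGm.of_uncurry_left (x := x)).aemeasurable
        · exact (hm.pow_const r).aemeasurable
        · exact (hG.pow_const p).aemeasurable)
      (by simp [Fin.sum_univ_three]; simp at hpqr; linarith)
      (by
        intro i _
        fin_cases i
        · change 0 ≤ 1 / q; positivity
        · exact hrq'
        · exact hpq')
    simp only [Fin.prod_univ_three, Matrix.cons_val_zero, Matrix.cons_val_one,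
      Matrix.cons_val] at h3
    have h4 : ∀ y, (Φ x y ^ r * G y ^ p) ^ (1 / q) * (Φ x y ^ r) ^ (1 / r - 1 / q) *
        (G y ^ p) ^ (1 / p - 1 / q) = Φ x y * G y := by
      intro y
      have e : ∀ (a : ℝ≥0∞) (s : ℝ), 0 < s → 0 ≤ 1 / s - 1 / q →
          (a ^ s) ^ (1 / q) * (a ^ s) ^ (1 / s - 1 / q) = a := by
        intro a s hs h
        rw [← ENNReal.rpow_add_of_nonneg _ _ (by positivity) h, ← ENNReal.rpow_mul,
          show s * (1 / q + (1 / s - 1 / q)) = 1 by field_simp; ring, ENNReal.rpow_one]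
      rw [ENNReal.mul_rpow_of_nonneg _ _ (by positivity)]
      calc _ = ((Φ x y ^ r) ^ (1 / q) * (Φ x y ^ r) ^ (1 / r - 1 / q)) *
            ((G y ^ p) ^ (1 / q) * (G y ^ p) ^ (1 / p - 1 / q)) := by ring
        _ = _ := by rw [e _ r hr hrq', e _ p hp hpq']
    simp only [h4] at h3
    calc _ ≤ ((∫⁻ y, Φ x y ^ r * G y ^ p ∂ν) ^ (1 / q) *
          (B ^ (1 / r - 1 / q) * S ^ (1 / p - 1 / q))) ^ q := by
          refine ENNReal.rpow_le_rpow (h3.trans ?_) hq.le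
          rw [mul_assoc]
          gcongr
          exact h₁ x
      _ = _ := by
        rw [ENNReal.mul_rpow_of_nonneg _ _ hq.le, ← ENNReal.rpow_mul,
          one_div_mul_cancel hq.ne', ENNReal.rpow_one]
  have hmain : ∫⁻ x, (∫⁻ y, Φ x y * G y ∂ν) ^ q ∂μ ≤ (B ^ (1 / r) * S ^ (1 / p)) ^ q := by
    calc _ ≤ ∫⁻ x, (∫⁻ y, Φ x y ^ r * G y ^ p ∂ν) *
            (B ^ (1 / r - 1 / q) * S ^ (1 / p - 1 / q)) ^ q ∂μ := lintegral_mono key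
      _ = (∫⁻ y, (∫⁻ x, Φ x y ^ r * G y ^ p ∂μ) ∂ν) *
            (B ^ (1 / r - 1 / q) * S ^ (1 / p - 1 / q)) ^ q := by
          rw [lintegral_mul_const _ hGm.lintegral_prod_right,
            lintegral_lintegral_swap hGm.aemeasurable]
      _ ≤ (B * S) * (B ^ (1 / r - 1 / q) * S ^ (1 / p - 1 / q)) ^ q := by
          gcongr ?_ * _
          rw [hS, ← lintegral_const_mul _ (hG.pow_const p)]
          refine lintegral_mono fun y => ?_
          rw [lintegral_mul_const _ ((hΦ.of_uncurry_right (y := y)).pow_const r)]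
          gcongr
          exact h₂ y
      _ = ((B * S) ^ (1 / q) * (B ^ (1 / r - 1 / q) * S ^ (1 / p - 1 / q))) ^ q := by
          rw [ENNReal.mul_rpow_of_nonneg ((B * S) ^ (1 / q)) _ hq.le, ← ENNReal.rpow_mul _ (1 / q),
            one_div_mul_cancel hq.ne', ENNReal.rpow_one]
      _ = _ := by
          congr 1
          rw [ENNReal.mul_rpow_of_nonneg _ _ (by positivity)]
          calc _ = (B ^ (1 / q) * B ^ (1 / r - 1 / q)) * (S ^ (1 / q) * S ^ (1 / p - 1 / q)) := by
                ring
            _ = _ := by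
              rw [← ENNReal.rpow_add_of_nonneg _ _ (by positivity) hrq',
                ← ENNReal.rpow_add_of_nonneg _ _ (by positivity) hpq']
              congr 2 <;> ring
  calc _ ≤ ((B ^ (1 / r) * S ^ (1 / p)) ^ q) ^ (1 / q) := by gcongr
    _ = _ := by rw [← ENNReal.rpow_mul, mul_one_div_cancel hq.ne', ENNReal.rpow_one]

/-! ### The one-dimensional operator -/

/-- Change of variables `x = e^t` on the half-line. -/
theorem lintegral_exp (g : ℝ → ℝ≥0∞) :
    ∫⁻ x in Ioi (0 : ℝ), g x = ∫⁻ t : ℝ, ENNReal.ofReal (Real.exp t) * g (Real.exp t) := by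
  have h := lintegral_image_eq_lintegral_abs_deriv_mul (s := univ) (f := Real.exp)
    (f' := Real.exp) MeasurableSet.univ (fun x _ => (Real.hasDerivAt_exp x).hasDerivWithinAt)
    Real.exp_injective.injOn g
  rw [image_univ, Real.range_exp] at h
  rw [h]
  simp [abs_of_pos (Real.exp_pos _)]

/-- The kernel `x^(-β) y^(-α) |x-y|^(-λ) 1_{y<x}` of the one-dimensional operator. It is only
meaningful for `x, y > 0`. -/
noncomputable def cesaroKernel (α β lam x y : ℝ) : ℝ≥0∞ :=
  if y < x then ENNReal.ofReal (x ^ (-β) * y ^ (-α) * |x - y| ^ (-lam)) else 0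

theorem measurable_cesaroKernel (α β lam : ℝ) :
    Measurable (Function.uncurry (cesaroKernel α β lam)) := by
  unfold cesaroKernel Function.uncurry
  refine Measurable.ite (measurableSet_lt measurable_snd measurable_fst) ?_ measurable_const
  fun_prop

/-- The function `φ(u) = e^(c u) (1 - e^u)^(-λ) 1_{u<0}`: the kernel of the one-dimensional
operator written as a convolution kernel in logarithmic coordinates. -/
noncomputable def mellinProfile (c lam u : ℝ) : ℝ≥0∞ :=
  if u < 0 then ENNReal.ofReal (Real.exp (c * u) * (1 - Real.exp u) ^ (-lam)) else 0

theorem measurable_mellinProfile (c lam : ℝ) : Measurable (mellinProfile c lam) := by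
  unfold mellinProfile
  refine Measurable.ite (measurableSet_lt measurable_id measurable_const) ?_ measurable_const
  fun_prop

theorem mellinProfile_rpow (c lam u : ℝ) {r : ℝ} (hr : 0 < r) :
    mellinProfile c lam u ^ r = mellinProfile (c * r) (lam * r) u := by
  unfold mellinProfile
  split_ifs with hu
  · have h1 : 0 ≤ 1 - Real.exp u := by
      have := Real.exp_le_one_iff.2 hu.le
      linarith
    rw [ENNReal.ofReal_rpow_of_nonneg (by positivity) hr.le,
      Real.mul_rpow (Real.exp_pos _).le (by positivity), ← Real.exp_mul, ← Real.rpow_mul h1]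
    congr 3 <;> ring_nf
  · exact ENNReal.zero_rpow_of_pos hr

/-- The integrand is a majorant of the Beta integrand `v^(a-1) (1-v)^(-b)`. -/
theorem lintegral_Ioo_beta_majorant {a b : ℝ} (ha : 0 < a) (hb : b < 1) :
    ∫⁻ v in Ioo (0 : ℝ) 1, ENNReal.ofReal (2 ^ b * v ^ (a - 1) + 2 * (1 - v) ^ (-b)) =
      ENNReal.ofReal (2 ^ b / a + 2 / (1 - b)) := by
  have i1 : IntervalIntegrable (fun v : ℝ => v ^ (a - 1)) volume 0 1 :=
    intervalIntegral.intervalIntegrable_rpow' (by linarith)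
  have i2 : IntervalIntegrable (fun v : ℝ => (1 - v) ^ (-b)) volume 0 1 := by
    have := (intervalIntegral.intervalIntegrable_rpow' (a := 1) (b := 0) (r := -b)
      (by linarith)).comp_sub_left 1
    simpa using this
  have i3 := (i1.const_mul (2 ^ b)).add (i2.const_mul 2)
  rw [← ofReal_integral_eq_lintegral_ofReal]
  · rw [← integral_Ioc_eq_integral_Ioo, ← intervalIntegral.integral_of_le zero_le_one,
      intervalIntegral.integral_add (i1.const_mul _) (i2.const_mul _),
      intervalIntegral.integral_const_mul, intervalIntegral.integral_const_mul,
      intervalIntegral.integral_comp_sub_left (fun v : ℝ => v ^ (-b)) 1,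
      integral_rpow (Or.inl (by linarith)), integral_rpow (Or.inl (by linarith))]
    have h1 : (0 : ℝ) ^ (a - 1 + 1) = 0 := Real.zero_rpow (by linarith)
    have h2 : (1 - 1 : ℝ) ^ (-b + 1) = 0 := by rw [sub_self]; exact Real.zero_rpow (by linarith)
    rw [h1, h2]
    congr 1
    simp
    ring_nf
  · exact ((intervalIntegrable_iff_integrableOn_Ioo_of_le zero_le_one).1 i3)
  · refine (ae_restrict_mem measurableSet_Ioo).mono fun v hv => ?_
    have : 0 ≤ v := hv.1.le
    have : 0 ≤ 1 - v := by linarith [hv.2]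
    simp only [Pi.zero_apply]
    positivity

/-- Bound for the Beta integral, exhibiting its `1/a` growth as `a → 0`: in `v = e^u` the integrand
`v^(a-1) (1-v)^(-b)` is at most `2^b v^(a-1)` when `v ≤ 1/2` and at most `2 (1-v)^(-b)` when
`v ≥ 1/2`. -/
theorem lintegral_mellinProfile_le {a b : ℝ} (ha : 0 < a) (hb0 : 0 < b) (hb : b < 1) :
    ∫⁻ u, mellinProfile a b u ≤ ENNReal.ofReal (2 ^ b / a + 2 / (1 - b)) := by
  rw [← lintegral_Ioo_beta_majorant ha hb]
  have e : ∫⁻ v in Ioo (0 : ℝ) 1, ENNReal.ofReal (2 ^ b * v ^ (a - 1) + 2 * (1 - v) ^ (-b)) =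
      ∫⁻ v in Ioi (0 : ℝ), (Iio (1 : ℝ)).indicator
        (fun v => ENNReal.ofReal (2 ^ b * v ^ (a - 1) + 2 * (1 - v) ^ (-b))) v := by
    rw [setLIntegral_indicator measurableSet_Iio, inter_comm, Ioi_inter_Iio]
  rw [e, lintegral_exp]
  refine lintegral_mono fun u => ?_
  by_cases hu : u < 0
  · have h1 : Real.exp u < 1 := by simpa using hu
    have h0 := Real.exp_pos u
    set v := Real.exp u with hv
    have e1 : Real.exp (a * u) = v ^ a := by rw [hv, ← Real.exp_mul, mul_comm]
    have hva : v * v ^ (a - 1) = v ^ a := by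
      rw [Real.rpow_sub_one h0.ne']; field_simp
    have h1v : 0 < 1 - v := by linarith
    simp only [mellinProfile, hu, if_true, mem_Iio, h1, indicator_of_mem]
    rw [← ENNReal.ofReal_mul h0.le, ← hv, e1]
    refine ENNReal.ofReal_le_ofReal ?_
    rw [mul_add, show v * (2 ^ b * v ^ (a - 1)) = 2 ^ b * (v * v ^ (a - 1)) by ring, hva]
    have p1 : 0 < v ^ a := by positivity
    have p2 : 0 < (1 - v) ^ (-b) := by positivity
    rcases le_total v (1 / 2) with hv2 | hv2
    · have : (1 - v) ^ (-b) ≤ 2 ^ b := by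
        calc (1 - v) ^ (-b) ≤ (1 / 2 : ℝ) ^ (-b) :=
              Real.rpow_le_rpow_of_nonpos (by norm_num) (by linarith) (by linarith)
          _ = 2 ^ b := by
              rw [one_div, Real.inv_rpow (by norm_num), Real.rpow_neg (by norm_num), inv_inv]
      have : v ^ a * (1 - v) ^ (-b) ≤ v ^ a * 2 ^ b := by gcongr
      have : 0 ≤ v * (2 * (1 - v) ^ (-b)) := by positivity
      linarith
    · have h3 : v ^ a ≤ 1 := Real.rpow_le_one h0.le h1.le ha.le
      have : v ^ a * (1 - v) ^ (-b) ≤ (v * 2) * (1 - v) ^ (-b) := by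
        gcongr
        linarith
      have : 0 ≤ (2 : ℝ) ^ b * v ^ a := by positivity
      linarith
  · simp [mellinProfile, hu]

/-- Homogeneity in logarithmic coordinates: by the scaling relation between `p` and `q`, the kernel
with its Jacobian `e^s` and weight `e^(t/q)` is a function of `s - t` times `e^(s/p)`, the factor
that turns the `L^p` norm on the half-line into the one on `ℝ`. -/
theorem exp_mul_cesaroKernel {α β lam p q : ℝ} (hpq : 1 + 1 / q = 1 / p + (α + β + lam))
    (s t : ℝ) :
    ENNReal.ofReal (Real.exp (t / q)) *
        (ENNReal.ofReal (Real.exp s) * cesaroKernel α β lam (Real.exp t) (Real.exp s)) =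
      mellinProfile (1 - 1 / p - α) lam (s - t) * ENNReal.ofReal (Real.exp (s / p)) := by
  unfold cesaroKernel mellinProfile
  by_cases h : s < t
  · have h' : s - t < 0 := by linarith
    have h1 : 0 < 1 - Real.exp (s - t) := by
      have := Real.exp_lt_one_iff.2 h'
      linarith
    simp only [Real.exp_lt_exp, h, h', if_true]
    rw [← ENNReal.ofReal_mul (by positivity), ← ENNReal.ofReal_mul (by positivity),
      ← ENNReal.ofReal_mul (by positivity)]
    congr 1
    have h2 : |Real.exp t - Real.exp s| = Real.exp t * (1 - Real.exp (s - t)) := by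
      have : Real.exp t * Real.exp (s - t) = Real.exp s := by
        rw [← Real.exp_add]; congr 1; ring
      rw [abs_of_pos (by linarith [Real.exp_lt_exp.2 h]), mul_sub, this, mul_one]
    rw [h2, Real.mul_rpow (Real.exp_pos _).le h1.le, ← Real.exp_mul, ← Real.exp_mul,
      ← Real.exp_mul]
    have h3 : Real.exp (t / q) * (Real.exp s * (Real.exp (t * -β) * Real.exp (s * -α) *
        (Real.exp (t * -lam)))) =
        Real.exp ((1 - 1 / p - α) * (s - t)) * Real.exp (s / p) := by
      rw [← Real.exp_add, ← Real.exp_add, ← Real.exp_add, ← Real.exp_add, ← Real.exp_add]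
      congr 1
      have : 1 / q = 1 / p + (α + β + lam) - 1 := by linarith
      rw [div_eq_mul_one_div t q, this]
      ring
    linear_combination (1 - Real.exp (s - t)) ^ (-lam) * h3
  · simp [h]

theorem ofReal_exp_div_rpow {q : ℝ} (hq : 0 < q) (t : ℝ) :
    ENNReal.ofReal (Real.exp (t / q)) ^ q = ENNReal.ofReal (Real.exp t) := by
  rw [ENNReal.ofReal_rpow_of_pos (Real.exp_pos _), ← Real.exp_mul, div_mul_cancel₀ _ hq.ne']

/-- The one-dimensional `L^p → L^q` bound, with the constant given by Young's inequality for
`mellinProfile` with exponent `1 / (α + β + λ)`. -/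
theorem cesaro_one_dim {α β lam p q : ℝ} (hlam : 0 < lam)
    (hlamκ : lam < α + β + lam) (hp : 0 < p) (hq : 0 < q) (hpq : p ≤ q)
    (hrq : 1 / (α + β + lam) ≤ q) (hc : 0 < 1 - 1 / p - α)
    (hpqr : 1 + 1 / q = 1 / p + (α + β + lam)) {g : ℝ → ℝ≥0∞} (hg : Measurable g) :
    (∫⁻ x in Ioi (0 : ℝ), (∫⁻ y in Ioi (0 : ℝ), cesaroKernel α β lam x y * g y) ^ q) ^ (1 / q) ≤
      ENNReal.ofReal (2 ^ (lam / (α + β + lam)) / ((1 - 1 / p - α) / (α + β + lam)) +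
          2 / (1 - lam / (α + β + lam))) ^ (α + β + lam) *
        (∫⁻ y in Ioi (0 : ℝ), g y ^ p) ^ (1 / p) := by
  set κ := α + β + lam with hκ
  have hκ0 : 0 < κ := hlam.trans hlamκ
  set c := 1 - 1 / p - α with hcdef
  have hL : ∫⁻ x in Ioi (0 : ℝ), (∫⁻ y in Ioi (0 : ℝ), cesaroKernel α β lam x y * g y) ^ q =
      ∫⁻ t, (∫⁻ s, mellinProfile c lam (s - t) *
        (ENNReal.ofReal (Real.exp (s / p)) * g (Real.exp s))) ^ q := by
    rw [lintegral_exp]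
    refine lintegral_congr fun t => ?_
    rw [lintegral_exp, ← ofReal_exp_div_rpow hq t, ← ENNReal.mul_rpow_of_nonneg _ _ hq.le,
      ← lintegral_const_mul' _ _ ENNReal.ofReal_ne_top]
    congr 1
    refine lintegral_congr fun s => ?_
    rw [← mul_assoc (mellinProfile _ _ _), hcdef, ← exp_mul_cesaroKernel hpqr s t]
    ring
  have hR : ∫⁻ y in Ioi (0 : ℝ), g y ^ p =
      ∫⁻ s, (ENNReal.ofReal (Real.exp (s / p)) * g (Real.exp s)) ^ p := by
    rw [lintegral_exp]
    refine lintegral_congr fun s => ?_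
    rw [ENNReal.mul_rpow_of_nonneg _ _ hp.le, ofReal_exp_div_rpow hp]
  have hφ : ∫⁻ u, mellinProfile c lam u ^ (1 / κ) ≤
      ENNReal.ofReal (2 ^ (lam / κ) / (c / κ) + 2 / (1 - lam / κ)) := by
    simp only [mellinProfile_rpow _ _ _ (one_div_pos.2 hκ0), mul_one_div]
    exact lintegral_mellinProfile_le (by positivity) (by positivity) ((div_lt_one hκ0).2 hlamκ)
  have hm := measurable_mellinProfile c lam
  have := lintegral_schur_young (μ := (volume : Measure ℝ)) (ν := (volume : Measure ℝ))
    (Φ := fun t s => mellinProfile c lam (s - t))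
    (G := fun s => ENNReal.ofReal (Real.exp (s / p)) * g (Real.exp s))
    (hm.comp (measurable_snd.sub measurable_fst)) (by fun_prop)
    hp hq (one_div_pos.2 hκ0) hpq hrq (by rw [one_div_one_div]; exact hpqr)
    (fun t => (lintegral_sub_right_eq_self (fun u => mellinProfile c lam u ^ (1 / κ)) t).le)
    (fun s => (lintegral_sub_left_eq_self (fun u => mellinProfile c lam u ^ (1 / κ)) s).le)
  rw [one_div_one_div] at this
  rw [hL, hR]
  refine this.trans ?_
  gcongr

/-- The one-dimensional estimate with constant `C (p - p₋)^(-κ)`, where `p₋ = 1/(1-α)`,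
`κ = α + β + λ`, and `C` does not depend on `p`. -/
theorem cesaro_one_dim_uniform {α β lam : ℝ} (hα : α ∈ Ioo (0 : ℝ) 1) (hβ : β ∈ Ioo (0 : ℝ) 1)
    (hlam : lam ∈ Ioo (0 : ℝ) 1) (hκ : α + β + lam < 1) :
    ∃ C : ℝ, 0 < C ∧ ∀ p : ℝ, 1 / (1 - α) < p → p ≤ 1 / (1 - α - lam) →
      ∀ g : ℝ → ℝ≥0∞, Measurable g →
        (∫⁻ x in Ioi (0 : ℝ), (∫⁻ y in Ioi (0 : ℝ), cesaroKernel α β lam x y * g y) ^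
            (1 / (1 / p + (α + β + lam) - 1))) ^ (1 / (1 / (1 / p + (α + β + lam) - 1))) ≤
          ENNReal.ofReal (C * (p - 1 / (1 - α)) ^ (-(α + β + lam))) *
            (∫⁻ y in Ioi (0 : ℝ), g y ^ p) ^ (1 / p) := by
  obtain ⟨hα0, hα1⟩ := hα
  obtain ⟨hβ0, hβ1⟩ := hβ
  obtain ⟨hl0, hl1⟩ := hlam
  set κ := α + β + lam with hκd
  have hκ0 : 0 < κ := by linarith
  have h1α : 0 < 1 - α := by linarith
  set P := 1 / (1 - α - lam) with hP
  have hP0 : 0 < P := one_div_pos.2 (by linarith)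
  have hb : 0 < 1 - lam / κ := by
    rw [sub_pos, div_lt_one hκ0]; linarith
  set D : ℝ := 2 ^ (lam / κ) * (P * κ / (1 - α)) + 2 / (1 - lam / κ) * P with hD
  have hD0 : 0 < D := by positivity
  refine ⟨D ^ κ, by positivity, fun p hp1 hp2 g hg => ?_⟩
  have hp0 : 0 < p := lt_trans (one_div_pos.2 h1α) hp1
  have hinv : 1 / p < 1 - α := by
    rw [div_lt_iff₀ hp0]
    rwa [div_lt_iff₀ h1α, mul_comm] at hp1
  have hinv2 : 1 - α - lam ≤ 1 / p := by
    rw [le_div_iff₀ hp0]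
    rwa [hP, le_div_iff₀ (by linarith), mul_comm] at hp2
  have hQ0 : 0 < 1 / p + κ - 1 := by linarith
  set δ := p - 1 / (1 - α) with hδ
  have hδ0 : 0 < δ := by linarith
  have hδP : δ ≤ P := by
    have := one_div_pos.2 h1α
    linarith
  refine (cesaro_one_dim hl0 (by linarith) hp0 (one_div_pos.2 hQ0) ?_ ?_ (by linarith)
    (by rw [one_div_one_div]; linarith) hg).trans ?_
  · rw [le_one_div hp0 hQ0]; linarith
  · exact one_div_le_one_div_of_le hQ0 (by linarith)
  gcongr ?_ * _
  rw [← hκd]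
  -- The exponent `1 - 1/p - α` vanishes linearly at `p = 1 / (1 - α)`, which gives the blow-up rate.
  have hc : 1 - 1 / p - α = (1 - α) * δ / p := by
    rw [hδ]; field_simp; ring
  have hle : 2 ^ (lam / κ) / ((1 - 1 / p - α) / κ) + 2 / (1 - lam / κ) ≤ D / δ := by
    have e1 : 2 ^ (lam / κ) / ((1 - 1 / p - α) / κ) =
        2 ^ (lam / κ) * (p * κ / (1 - α)) / δ := by
      rw [hc]; field_simp
    have e2 : 2 / (1 - lam / κ) = 2 / (1 - lam / κ) * δ / δ := by field_simp
    rw [e1, e2, ← add_div, hD]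
    gcongr
  calc _ ≤ ENNReal.ofReal (D / δ) ^ κ := by gcongr
    _ = ENNReal.ofReal (D ^ κ * δ ^ (-κ)) := by
      rw [ENNReal.ofReal_rpow_of_pos (by positivity), Real.div_rpow hD0.le hδ0.le,
        Real.rpow_neg hδ0.le, div_eq_mul_inv]

/-! ### The two-dimensional operator -/

/-- Domination by the iterated nonnegative integral, with the order of integration exchanged. No
integrability is needed: where a Bochner integral is undefined its value is `0`. -/
theorem ofReal_abs_cesaroHardy2_le (α₁ α₂ β₁ β₂ lam₁ lam₂ : ℝ) {f : ℝ → ℝ → ℝ}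
    (hf : Measurable (Function.uncurry f)) {x₁ x₂ : ℝ} (hx₁ : 0 < x₁) (hx₂ : 0 < x₂) :
    ENNReal.ofReal |cesaroHardy2 α₁ α₂ β₁ β₂ lam₁ lam₂ f x₁ x₂| ≤
      ∫⁻ y₂ in Ioi (0 : ℝ), cesaroKernel α₂ β₂ lam₂ x₂ y₂ *
        ∫⁻ y₁ in Ioi (0 : ℝ), cesaroKernel α₁ β₁ lam₁ x₁ y₁ * ENNReal.ofReal |f y₁ y₂| := by
  have hk : ∀ α β lam : ℝ, Measurable (Function.uncurry (cesaroKernel α β lam)) :=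
    measurable_cesaroKernel
  have hk₁ := (hk α₁ β₁ lam₁).of_uncurry_left (x := x₁)
  have hk₂ := (hk α₂ β₂ lam₂).of_uncurry_left (x := x₂)
  have hc0 : 0 ≤ x₁ ^ (-β₁) * x₂ ^ (-β₂) := by positivity
  have hF : Measurable (Function.uncurry fun y₂ y₁ =>
      cesaroKernel α₂ β₂ lam₂ x₂ y₂ *
        (cesaroKernel α₁ β₁ lam₁ x₁ y₁ * ENNReal.ofReal |f y₁ y₂|)) := by
    have h1 : Measurable fun z : ℝ × ℝ => f z.2 z.1 := hf.comp measurable_swap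
    have h2 : Measurable fun z : ℝ × ℝ => ENNReal.ofReal |f z.2 z.1| := by fun_prop
    exact (hk₂.comp measurable_fst).mul ((hk₁.comp measurable_snd).mul h2)
  calc ENNReal.ofReal |cesaroHardy2 α₁ α₂ β₁ β₂ lam₁ lam₂ f x₁ x₂|
      = ENNReal.ofReal (x₁ ^ (-β₁) * x₂ ^ (-β₂)) *
        ‖∫ y₁ in Ioo (0 : ℝ) x₁, ∫ y₂ in Ioo (0 : ℝ) x₂,
          y₁ ^ (-α₁) * y₂ ^ (-α₂) * f y₁ y₂ *
            |x₁ - y₁| ^ (-lam₁) * |x₂ - y₂| ^ (-lam₂)‖ₑ := by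
        unfold cesaroHardy2
        rw [abs_mul, abs_of_nonneg hc0, ENNReal.ofReal_mul hc0, Real.enorm_eq_ofReal_abs]
    _ ≤ ENNReal.ofReal (x₁ ^ (-β₁) * x₂ ^ (-β₂)) *
        ∫⁻ y₁ in Ioo (0 : ℝ) x₁, ∫⁻ y₂ in Ioo (0 : ℝ) x₂,
          ‖y₁ ^ (-α₁) * y₂ ^ (-α₂) * f y₁ y₂ *
            |x₁ - y₁| ^ (-lam₁) * |x₂ - y₂| ^ (-lam₂)‖ₑ := by
        gcongr
        refine (enorm_integral_le_lintegral_enorm _).trans ?_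
        exact lintegral_mono fun y₁ => enorm_integral_le_lintegral_enorm _
    _ = ∫⁻ y₁ in Ioo (0 : ℝ) x₁, ∫⁻ y₂ in Ioo (0 : ℝ) x₂,
          cesaroKernel α₂ β₂ lam₂ x₂ y₂ *
            (cesaroKernel α₁ β₁ lam₁ x₁ y₁ * ENNReal.ofReal |f y₁ y₂|) := by
        rw [← lintegral_const_mul' _ _ ENNReal.ofReal_ne_top]
        refine setLIntegral_congr_fun measurableSet_Ioo fun y₁ hy₁ => ?_
        rw [← lintegral_const_mul' _ _ ENNReal.ofReal_ne_top]
        refine setLIntegral_congr_fun measurableSet_Ioo fun y₂ hy₂ => ?_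
        have := hy₁.1
        have := hy₂.1
        simp only [cesaroKernel, hy₁.2, hy₂.2, if_true, Real.enorm_eq_ofReal_abs]
        rw [← ENNReal.ofReal_mul hc0, ← ENNReal.ofReal_mul (by positivity),
          ← ENNReal.ofReal_mul (by positivity)]
        congr 1
        simp only [abs_mul]
        rw [abs_of_nonneg (by positivity : 0 ≤ y₁ ^ (-α₁)),
          abs_of_nonneg (by positivity : 0 ≤ y₂ ^ (-α₂)),
          abs_of_nonneg (by positivity : 0 ≤ |x₁ - y₁| ^ (-lam₁)),
          abs_of_nonneg (by positivity : 0 ≤ |x₂ - y₂| ^ (-lam₂))]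
        ring
    _ ≤ ∫⁻ y₁ in Ioi (0 : ℝ), ∫⁻ y₂ in Ioi (0 : ℝ),
          cesaroKernel α₂ β₂ lam₂ x₂ y₂ *
            (cesaroKernel α₁ β₁ lam₁ x₁ y₁ * ENNReal.ofReal |f y₁ y₂|) :=
        (lintegral_mono_set Ioo_subset_Ioi_self).trans
          (lintegral_mono fun y₁ => lintegral_mono_set Ioo_subset_Ioi_self)
    _ = ∫⁻ y₂ in Ioi (0 : ℝ), ∫⁻ y₁ in Ioi (0 : ℝ),
          cesaroKernel α₂ β₂ lam₂ x₂ y₂ *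
            (cesaroKernel α₁ β₁ lam₁ x₁ y₁ * ENNReal.ofReal |f y₁ y₂|) :=
        (lintegral_lintegral_swap hF.aemeasurable).symm
    _ = _ := by
        refine lintegral_congr fun y₂ => lintegral_const_mul' _ _ ?_
        unfold cesaroKernel
        split_ifs <;> simp

/-- Theorem 3.1 B, upper bound (two-dimensional case): there is a finite
constant `C > 0` such that for all `pⱼ ∈ (p₋⁽ʲ⁾, p₊⁽ʲ⁾]`, with `qⱼ` defined by
`1 + 1/qⱼ = 1/pⱼ + κⱼ`, every measurable `f` with `‖f‖_{p₁,p₂} < ∞` satisfies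
`‖U₂[f]‖_{q₁,q₂} ≤ C (p₁-p₋⁽¹⁾)^(-κ₁) (p₂-p₋⁽²⁾)^(-κ₂) ‖f‖_{p₁,p₂}`. -/
theorem cesaroHardy2_upper_bound
    (α₁ α₂ β₁ β₂ lam₁ lam₂ : ℝ)
    (hα₁ : α₁ ∈ Ioo (0 : ℝ) 1) (hα₂ : α₂ ∈ Ioo (0 : ℝ) 1)
    (hβ₁ : β₁ ∈ Ioo (0 : ℝ) 1) (hβ₂ : β₂ ∈ Ioo (0 : ℝ) 1)
    (hlam₁ : lam₁ ∈ Ioo (0 : ℝ) 1) (hlam₂ : lam₂ ∈ Ioo (0 : ℝ) 1)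
    (hκ₁ : α₁ + β₁ + lam₁ < 1) (hκ₂ : α₂ + β₂ + lam₂ < 1) :
    ∃ C : ℝ, 0 < C ∧
      ∀ p₁ p₂ : ℝ,
        1 / (1 - α₁) < p₁ → p₁ ≤ 1 / (1 - α₁ - lam₁) →
        1 / (1 - α₂) < p₂ → p₂ ≤ 1 / (1 - α₂ - lam₂) →
        ∀ f : ℝ → ℝ → ℝ, Measurable (Function.uncurry f) →
          mixedNorm p₁ p₂ f < ⊤ →
          mixedNorm (1 / (1 / p₁ + (α₁ + β₁ + lam₁) - 1))
              (1 / (1 / p₂ + (α₂ + β₂ + lam₂) - 1))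
              (cesaroHardy2 α₁ α₂ β₁ β₂ lam₁ lam₂ f)
            ≤ ENNReal.ofReal
                (C * (p₁ - 1 / (1 - α₁)) ^ (-(α₁ + β₁ + lam₁)) *
                  (p₂ - 1 / (1 - α₂)) ^ (-(α₂ + β₂ + lam₂))) *
              mixedNorm p₁ p₂ f := by
  obtain ⟨C₁, hC₁, H₁⟩ := cesaro_one_dim_uniform hα₁ hβ₁ hlam₁ hκ₁
  obtain ⟨C₂, hC₂, H₂⟩ := cesaro_one_dim_uniform hα₂ hβ₂ hlam₂ hκ₂
  refine ⟨C₁ * C₂, by positivity, fun p₁ p₂ hp₁ hp₁' hp₂ hp₂' f hf _ => ?_⟩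
  specialize H₁ p₁ hp₁ hp₁'
  specialize H₂ p₂ hp₂ hp₂'
  have hp₁0 : 0 < p₁ := lt_trans (one_div_pos.2 (by linarith [hα₁.2])) hp₁
  have hp₂0 : 0 < p₂ := lt_trans (one_div_pos.2 (by linarith [hα₂.2])) hp₂
  set κ₁ := α₁ + β₁ + lam₁ with hκ₁d
  set κ₂ := α₂ + β₂ + lam₂ with hκ₂d
  have hα₁' : 0 < 1 - α₁ := by linarith [hα₁.2]
  have hinv : 1 / p₁ < 1 := by
    rw [div_lt_one hp₁0]
    exact lt_trans (by rw [lt_div_iff₀ hα₁']; linarith [hα₁.1]) hp₁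
  have hinv2 : 1 - α₁ - lam₁ ≤ 1 / p₁ := by
    rw [le_div_iff₀ hp₁0]
    rwa [le_div_iff₀ (by linarith [hβ₁.1]), mul_comm] at hp₁'
  have hQ : 0 < 1 / p₁ + κ₁ - 1 := by linarith [hβ₁.1]
  set q₁ := 1 / (1 / p₁ + κ₁ - 1) with hq₁
  set q₂ := 1 / (1 / p₂ + κ₂ - 1) with hq₂
  have hq₁1 : 1 < q₁ := by rw [hq₁, lt_div_iff₀ hQ]; linarith
  have hq₁0 : 0 < q₁ := by linarith
  set A₁ := ENNReal.ofReal (C₁ * (p₁ - 1 / (1 - α₁)) ^ (-κ₁)) with hA₁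
  set A₂ := ENNReal.ofReal (C₂ * (p₂ - 1 / (1 - α₂)) ^ (-κ₂)) with hA₂
  have hconst : ENNReal.ofReal (C₁ * C₂ * (p₁ - 1 / (1 - α₁)) ^ (-κ₁) *
      (p₂ - 1 / (1 - α₂)) ^ (-κ₂)) = A₂ * A₁ := by
    have d₁ : 0 < p₁ - 1 / (1 - α₁) := by linarith
    have d₂ : 0 < p₂ - 1 / (1 - α₂) := by linarith
    rw [hA₁, hA₂, ← ENNReal.ofReal_mul (by positivity)]
    congr 1; ring
  rw [hconst]
  have hfa : Measurable fun z : ℝ × ℝ => ENNReal.ofReal |f z.1 z.2| := by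
    have : Measurable fun z : ℝ × ℝ => f z.1 z.2 := hf
    fun_prop
  set V : ℝ → ℝ → ℝ≥0∞ := fun x₁ y₂ =>
    ∫⁻ y₁ in Ioi (0 : ℝ), cesaroKernel α₁ β₁ lam₁ x₁ y₁ * ENNReal.ofReal |f y₁ y₂| with hV
  have hVm : Measurable (Function.uncurry V) := by
    have h : Measurable fun z : (ℝ × ℝ) × ℝ =>
        cesaroKernel α₁ β₁ lam₁ z.1.1 z.2 * ENNReal.ofReal |f z.2 z.1.2| :=
      ((measurable_cesaroKernel α₁ β₁ lam₁).comp
        ((measurable_fst.comp measurable_fst).prodMk measurable_snd)).mul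
        (hfa.comp (measurable_snd.prodMk (measurable_snd.comp measurable_fst)))
    exact h.lintegral_prod_right'
  set h : ℝ → ℝ≥0∞ := fun y₂ =>
    (∫⁻ y₁ in Ioi (0 : ℝ), ENNReal.ofReal |f y₁ y₂| ^ p₁) ^ (1 / p₁) with hh
  have hhm : Measurable h :=
    (Measurable.lintegral_prod_left (f := fun x y => ENNReal.ofReal |f x y| ^ p₁)
      (hfa.pow_const p₁)).pow_const _
  -- Domination by the positive kernels, then Minkowski in `(x₁, y₂)`, then the estimate in `x₁`.
  have hinner : ∀ x₂ : ℝ, 0 < x₂ →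
      (∫⁻ x₁ in Ioi (0 : ℝ),
          ENNReal.ofReal |cesaroHardy2 α₁ α₂ β₁ β₂ lam₁ lam₂ f x₁ x₂| ^ q₁) ^ (1 / q₁) ≤
        ∫⁻ y₂ in Ioi (0 : ℝ), cesaroKernel α₂ β₂ lam₂ x₂ y₂ * (A₁ * h y₂) := by
    intro x₂ hx₂
    have hk₂ := (measurable_cesaroKernel α₂ β₂ lam₂).of_uncurry_left (x := x₂)
    calc _ ≤ (∫⁻ x₁ in Ioi (0 : ℝ),
          (∫⁻ y₂ in Ioi (0 : ℝ), cesaroKernel α₂ β₂ lam₂ x₂ y₂ * V x₁ y₂) ^ q₁) ^ (1 / q₁) := by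
          refine ENNReal.rpow_le_rpow (setLIntegral_mono' measurableSet_Ioi fun x₁ hx₁ => ?_)
            (by positivity)
          exact ENNReal.rpow_le_rpow
            (ofReal_abs_cesaroHardy2_le α₁ α₂ β₁ β₂ lam₁ lam₂ hf hx₁ hx₂) hq₁0.le
      _ ≤ ∫⁻ y₂ in Ioi (0 : ℝ), (∫⁻ x₁ in Ioi (0 : ℝ),
            (cesaroKernel α₂ β₂ lam₂ x₂ y₂ * V x₁ y₂) ^ q₁) ^ (1 / q₁) :=
          lintegral_minkowski ((hk₂.comp measurable_snd).mul hVm) hq₁1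
      _ ≤ _ := by
          refine lintegral_mono fun y₂ => ?_
          simp only [ENNReal.mul_rpow_of_nonneg _ _ hq₁0.le]
          rw [lintegral_const_mul _ ((hVm.of_uncurry_right (y := y₂)).pow_const _),
            ENNReal.mul_rpow_of_nonneg _ _ (by positivity), ← ENNReal.rpow_mul,
            mul_one_div_cancel hq₁0.ne', ENNReal.rpow_one]
          gcongr
          exact H₁ _ (hfa.comp (measurable_id.prodMk measurable_const))
  unfold mixedNorm
  calc _ ≤ (∫⁻ x₂ in Ioi (0 : ℝ), (∫⁻ y₂ in Ioi (0 : ℝ),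
        cesaroKernel α₂ β₂ lam₂ x₂ y₂ * (A₁ * h y₂)) ^ q₂) ^ (1 / q₂) := by
        have hq₂0 : 0 ≤ q₂ := by
          refine (one_div_pos.2 ?_).le
          have : 1 - α₂ - lam₂ ≤ 1 / p₂ := by
            rw [le_div_iff₀ hp₂0]
            rwa [le_div_iff₀ (by linarith [hβ₂.1]), mul_comm] at hp₂'
          linarith [hβ₂.1]
        refine ENNReal.rpow_le_rpow (setLIntegral_mono' measurableSet_Ioi fun x₂ hx₂ => ?_)
          (by positivity)
        rw [div_eq_mul_one_div q₂ q₁, mul_comm, ENNReal.rpow_mul]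
        exact ENNReal.rpow_le_rpow (hinner x₂ hx₂) hq₂0
    _ ≤ A₂ * (∫⁻ y₂ in Ioi (0 : ℝ), (A₁ * h y₂) ^ p₂) ^ (1 / p₂) := H₂ _ (hhm.const_mul A₁)
    _ = _ := by
        simp only [ENNReal.mul_rpow_of_nonneg _ _ hp₂0.le]
        rw [lintegral_const_mul _ (hhm.pow_const p₂),
          ENNReal.mul_rpow_of_nonneg _ _ (by positivity), ← ENNReal.rpow_mul,
          mul_one_div_cancel hp₂0.ne', ENNReal.rpow_one, mul_assoc]
        simp only [hh, ← ENNReal.rpow_mul, one_div_mul_eq_div]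
end

section
/- (Theorem 3.1 B, lower bound, two-dimensional case.) There is a constant c = c(α₁,α₂,β₁,β₂,λ₁,λ₂) > 0 such that for all p₁ ∈ (p_−^{(1)}, p_+^{(1)}] and p₂ ∈ (p_−^{(2)}, p_+^{(2)}], with q_j defined by 1 + 1/q_j = 1/p_j + κ_j (j = 1,2), there exists a nonzero measurable f : (0,∞)² → ℝ of product form f(x₁,x₂) = g₁(x₁)·g₂(x₂) with ‖f‖_{p₁,p₂} < ∞ and ‖U₂[f]‖_{q₁,q₂} ≥ c · (p₁ − p_−^{(1)})^{−κ₁} (p₂ − p_−^{(2)})^{−κ₂} · ‖f‖_{p₁,p₂}. -/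
/-!
The estimate is the product of two one-dimensional ones. On product functions `U₂` is the product of
two one-dimensional operators (`cesaroHardy2_prod`), and the mixed norm is the product of two
one-dimensional `L^r` norms (`mixedNorm_prod`).

In one dimension put `κ = α + β + λ`, `p₋ = 1/(1-α)` and write `δ = 1 - α - 1/p > 0`,
so that `1/q = β + λ - δ`. The extremising function is
the power `g(y) = y^(-1/p+δ)` on `(0,1)`, with `‖g‖_p = (1/(pδ))^(1/p)`. Since
`|x-y|^(-λ) ≥ x^(-λ)` for `0 < y < x`, on `(0,1)` the operator satisfies
`U g(x) ≥ x^(-β-λ) ∫₀ˣ y^(2δ-1) dy = (2δ)⁻¹ x^(-1/q+δ)`, and the right-hand side has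
`L^q` norm `(2δ)⁻¹ (1/(qδ))^(1/q)`. The quotient of the two norms is a bounded factor times
`δ^(-1-1/q+1/p) = δ^(-κ)`, and `δ = (1-α)(p-p₋)/p ≤ p - p₋`; the bounded factor is at least `β/2`.
-/

open MeasureTheory Set ENNReal

/-! ### Reduction to one dimension -/

/-- The one-dimensional Cesàro–Hardy operator
`U[g](x) = x^(-β) ∫₀ˣ y^(-α) g(y) |x-y|^(-λ) dy`. -/
noncomputable def cesaroHardy1 (α β lam : ℝ) (g : ℝ → ℝ) (x : ℝ) : ℝ :=
  x ^ (-β) * ∫ y in Ioo (0 : ℝ) x, y ^ (-α) * g y * |x - y| ^ (-lam)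

/-- The norm of `L^r(0,∞)`, with value `+∞` allowed. -/
noncomputable def halfLineNorm (r : ℝ) (g : ℝ → ℝ) : ℝ≥0∞ :=
  (∫⁻ x in Ioi (0 : ℝ), ENNReal.ofReal |g x| ^ r) ^ (1 / r)

/-- The function equal to `K x^s` on `(0,1)` and to `0` elsewhere. -/
noncomputable def truncPow (K s : ℝ) : ℝ → ℝ :=
  (Ioo (0 : ℝ) 1).indicator fun x => K * x ^ s

/-- No integrability is needed: pulling a constant out of a Bochner integral over a field holds
unconditionally. -/
lemma cesaroHardy2_prod (α₁ α₂ β₁ β₂ lam₁ lam₂ : ℝ) (g₁ g₂ : ℝ → ℝ) (x₁ x₂ : ℝ) :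
    cesaroHardy2 α₁ α₂ β₁ β₂ lam₁ lam₂ (fun x₁ x₂ => g₁ x₁ * g₂ x₂) x₁ x₂ =
      cesaroHardy1 α₁ β₁ lam₁ g₁ x₁ * cesaroHardy1 α₂ β₂ lam₂ g₂ x₂ := by
  unfold cesaroHardy2 cesaroHardy1
  have h : ∀ y₁ y₂ : ℝ, y₁ ^ (-α₁) * y₂ ^ (-α₂) * (g₁ y₁ * g₂ y₂) *
        |x₁ - y₁| ^ (-lam₁) * |x₂ - y₂| ^ (-lam₂) =
      (y₁ ^ (-α₁) * g₁ y₁ * |x₁ - y₁| ^ (-lam₁)) *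
        (y₂ ^ (-α₂) * g₂ y₂ * |x₂ - y₂| ^ (-lam₂)) := fun y₁ y₂ => by ring
  simp only [h, integral_const_mul, integral_mul_const]
  ring

lemma mixedNorm_mono {r₁ r₂ : ℝ} (hr₁ : 0 < r₁) (hr₂ : 0 < r₂) {f f' : ℝ → ℝ → ℝ}
    (h : ∀ x₁ x₂, |f x₁ x₂| ≤ |f' x₁ x₂|) : mixedNorm r₁ r₂ f ≤ mixedNorm r₁ r₂ f' := by
  unfold mixedNorm
  refine ENNReal.rpow_le_rpow (lintegral_mono fun x₂ => ?_) (by positivity)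
  refine ENNReal.rpow_le_rpow (lintegral_mono fun x₁ => ?_) (by positivity)
  exact ENNReal.rpow_le_rpow (ENNReal.ofReal_le_ofReal (h x₁ x₂)) hr₁.le

lemma mixedNorm_prod {r₁ r₂ : ℝ} (hr₁ : 0 < r₁) (hr₂ : 0 < r₂) {g₁ g₂ : ℝ → ℝ}
    (hg₁ : Measurable g₁) (hg₂ : Measurable g₂) :
    mixedNorm r₁ r₂ (fun x₁ x₂ => g₁ x₁ * g₂ x₂) =
      halfLineNorm r₁ g₁ * halfLineNorm r₂ g₂ := by
  unfold mixedNorm halfLineNorm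
  have m₁ : Measurable fun x => ENNReal.ofReal |g₁ x| ^ r₁ := by fun_prop
  have m₂ : Measurable fun x => ENNReal.ofReal |g₂ x| ^ r₂ := by fun_prop
  have inner : ∀ x₂, (∫⁻ x₁ in Ioi (0 : ℝ), ENNReal.ofReal |g₁ x₁ * g₂ x₂| ^ r₁) ^ (r₂ / r₁) =
      (∫⁻ x₁ in Ioi (0 : ℝ), ENNReal.ofReal |g₁ x₁| ^ r₁) ^ (r₂ / r₁) *
        ENNReal.ofReal |g₂ x₂| ^ r₂ := by
    intro x₂
    simp only [abs_mul, ENNReal.ofReal_mul (abs_nonneg _), ENNReal.mul_rpow_of_nonneg _ _ hr₁.le]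
    rw [lintegral_mul_const _ m₁, ENNReal.mul_rpow_of_nonneg _ _ (by positivity),
      ← ENNReal.rpow_mul, mul_div_cancel₀ _ hr₁.ne']
  simp only [inner]
  rw [lintegral_const_mul _ m₂, ENNReal.mul_rpow_of_nonneg _ _ (by positivity),
    ← ENNReal.rpow_mul]
  congr 2
  field_simp

/-! ### Truncated powers and their images -/

lemma measurable_truncPow (K s : ℝ) : Measurable (truncPow K s) := by
  unfold truncPow
  exact Measurable.indicator (by fun_prop) measurableSet_Ioo

lemma halfLineNorm_truncPow {K s r : ℝ} (hK : 0 < K) (hr : 0 < r) (hs : 0 < s * r + 1) :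
    halfLineNorm r (truncPow K s) = ENNReal.ofReal (K * (1 / (s * r + 1)) ^ (1 / r)) := by
  have e1 : ∀ x, ENNReal.ofReal |truncPow K s x| ^ r =
      (Ioo (0 : ℝ) 1).indicator (fun x => ENNReal.ofReal (K ^ r * x ^ (s * r))) x := by
    intro x
    unfold truncPow
    by_cases hx : x ∈ Ioo (0 : ℝ) 1
    · have h0 := hx.1
      rw [indicator_of_mem hx, indicator_of_mem hx, abs_of_pos (by positivity),
        ENNReal.ofReal_rpow_of_pos (by positivity),
        Real.mul_rpow hK.le (by positivity), ← Real.rpow_mul h0.le]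
    · simp [indicator_of_notMem hx, hr]
  have hint : IntervalIntegrable (fun x : ℝ => K ^ r * x ^ (s * r)) volume 0 1 :=
    (intervalIntegral.intervalIntegrable_rpow' (by linarith)).const_mul _
  have hI : IntegrableOn (fun x : ℝ => K ^ r * x ^ (s * r)) (Ioo 0 1) :=
    ((intervalIntegrable_iff_integrableOn_Ioo_of_le zero_le_one).1 hint)
  have e2 : ∫⁻ x in Ioi (0 : ℝ), ENNReal.ofReal |truncPow K s x| ^ r =
      ENNReal.ofReal (K ^ r * (1 / (s * r + 1))) := by
    simp only [e1]
    rw [setLIntegral_indicator measurableSet_Ioo,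
      inter_eq_left.2 Ioo_subset_Ioi_self,
      ← ofReal_integral_eq_lintegral_ofReal hI]
    · rw [← integral_Ioc_eq_integral_Ioo, ← intervalIntegral.integral_of_le zero_le_one,
        intervalIntegral.integral_const_mul, integral_rpow (Or.inl (by linarith)),
        Real.one_rpow, Real.zero_rpow hs.ne', sub_zero]
    · filter_upwards [ae_restrict_mem measurableSet_Ioo] with x hx
      have := hx.1
      show 0 ≤ _
      positivity
  unfold halfLineNorm
  rw [e2, ENNReal.ofReal_rpow_of_pos (by positivity),
    Real.mul_rpow (by positivity) (by positivity), ← Real.rpow_mul hK.le,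
    mul_one_div_cancel hr.ne', Real.rpow_one]

/-- Each factor is singular at one endpoint only, so the interval is split at its midpoint. -/
lemma intervalIntegrable_rpow_mul_sub_rpow {a lam x : ℝ} (ha : -1 < a) (hlam : lam < 1)
    (hx : 0 < x) :
    IntervalIntegrable (fun y : ℝ => y ^ a * (x - y) ^ (-lam)) volume 0 x := by
  refine IntervalIntegrable.trans (b := x / 2) ?_ ?_
  · refine (intervalIntegral.intervalIntegrable_rpow' ha).mul_continuousOn ?_
    refine ContinuousOn.rpow_const (by fun_prop) fun y hy => Or.inl ?_
    rw [uIcc_of_le (by linarith)] at hy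
    linarith [hy.2]
  · refine IntervalIntegrable.continuousOn_mul ?_ ?_
    · have h := (intervalIntegral.intervalIntegrable_rpow' (a := x / 2) (b := 0)
        (r := -lam) (by linarith)).comp_sub_left x
      simpa only [sub_zero, sub_self_div_two] using h
    · refine ContinuousOn.rpow_const (by fun_prop) fun y hy => Or.inl ?_
      rw [uIcc_of_le (by linarith)] at hy
      linarith [hy.1]

/-- Pointwise lower bound for the operator on a truncated power, from `|x-y|^(-λ) ≥ x^(-λ)`. -/
lemma truncPow_le_cesaroHardy1 {α β lam s a : ℝ} (hlam : 0 < lam) (hlam1 : lam < 1)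
    (ha : 0 < a) (hs : s - α = a - 1) (x : ℝ) :
    |truncPow (1 / a) (a - β - lam) x| ≤ |cesaroHardy1 α β lam (truncPow 1 s) x| := by
  by_cases hx : x ∈ Ioo (0 : ℝ) 1
  swap
  · simp [truncPow, indicator_of_notMem hx]
  obtain ⟨h0, h1⟩ := hx
  have e : ∫ y in Ioo (0 : ℝ) x, y ^ (-α) * truncPow 1 s y * |x - y| ^ (-lam) =
      ∫ y in Ioo (0 : ℝ) x, y ^ (a - 1) * (x - y) ^ (-lam) := by
    refine setIntegral_congr_fun measurableSet_Ioo fun y hy => ?_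
    have hy' : y ∈ Ioo (0 : ℝ) 1 := ⟨hy.1, hy.2.trans h1⟩
    simp only [truncPow, indicator_of_mem hy', one_mul]
    rw [abs_of_pos (sub_pos.2 hy.2), ← Real.rpow_add hy.1, ← hs]
    congr 2
    ring
  have lower : ∫ y in Ioo (0 : ℝ) x, y ^ (a - 1) * x ^ (-lam) ≤
      ∫ y in Ioo (0 : ℝ) x, y ^ (a - 1) * (x - y) ^ (-lam) := by
    refine setIntegral_mono_on ?_ ?_ measurableSet_Ioo fun y hy => ?_
    · exact (intervalIntegrable_iff_integrableOn_Ioo_of_le h0.le).1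
        ((intervalIntegral.intervalIntegrable_rpow' (by linarith)).mul_const _)
    · exact (intervalIntegrable_iff_integrableOn_Ioo_of_le h0.le).1
        (intervalIntegrable_rpow_mul_sub_rpow (by linarith) hlam1 h0)
    · have hy0 := hy.1
      refine mul_le_mul_of_nonneg_left ?_ (by positivity)
      exact Real.rpow_le_rpow_of_nonpos (sub_pos.2 hy.2) (by linarith) (by linarith)
  have value : ∫ y in Ioo (0 : ℝ) x, y ^ (a - 1) * x ^ (-lam) = x ^ a / a * x ^ (-lam) := by
    rw [← integral_Ioc_eq_integral_Ioo, ← intervalIntegral.integral_of_le h0.le,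
      intervalIntegral.integral_mul_const, integral_rpow (Or.inl (by linarith)),
      sub_add_cancel, Real.zero_rpow ha.ne', sub_zero]
  have hx' : x ∈ Ioo (0 : ℝ) 1 := ⟨h0, h1⟩
  have key : truncPow (1 / a) (a - β - lam) x ≤ cesaroHardy1 α β lam (truncPow 1 s) x := by
    unfold cesaroHardy1
    rw [e]
    refine le_trans (le_of_eq ?_) (mul_le_mul_of_nonneg_left lower (by positivity))
    rw [value, truncPow, indicator_of_mem hx', sub_sub, sub_eq_add_neg, neg_add,
      Real.rpow_add h0, Real.rpow_add h0]
    ring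
  refine abs_le_abs_of_nonneg ?_ key
  rw [truncPow, indicator_of_mem hx']
  positivity

/-! ### The one-dimensional lower bound -/

/-- The numerical inequality behind the constant `β/2`, with `d = 1 - α - 1/p`, `t = 1/q` and
`u = p - p₋`: the powers of `d` combine to `d^(-κ)`, while `p^(1/p) ≥ 1` and `t^t ≥ t ≥ β`. -/
lemma ratio_bound {β κ p t d u : ℝ} (hβ : 0 < β) (hκ : 0 < κ) (hp : 1 ≤ p) (hβt : β ≤ t)
    (ht1 : t ≤ 1) (hd : 0 < d) (hdu : d ≤ u) (ht : t = 1 / p + κ - 1) :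
    β / 2 * u ^ (-κ) * (1 / (p * d)) ^ (1 / p) ≤ 1 / (2 * d) * (1 / (1 / t * d)) ^ t := by
  have ht0 : 0 < t := hβ.trans_le hβt
  have hp0 : 0 < p := by linarith
  have h1 : u ^ (-κ) ≤ d ^ (-κ) := Real.rpow_le_rpow_of_nonpos hd hdu (by linarith)
  have h2 : (1 / (p * d)) ^ (1 / p) ≤ d ^ (-(1 / p)) := by
    rw [Real.rpow_neg hd.le, ← Real.inv_rpow hd.le]
    refine Real.rpow_le_rpow (by positivity) ?_ (by positivity)
    rw [one_div]
    exact inv_anti₀ hd (by nlinarith)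
  have h3 : β ≤ t ^ t := by
    refine hβt.trans ?_
    conv_lhs => rw [← Real.rpow_one t]
    exact Real.rpow_le_rpow_of_exponent_ge ht0 ht1 ht1
  have h4 : (1 / (1 / t * d)) ^ t = t ^ t * d ^ (-t) := by
    rw [Real.rpow_neg hd.le, ← Real.inv_rpow hd.le, ← Real.mul_rpow ht0.le (by positivity)]
    congr 1
    field_simp
  have h5 : d ^ (-κ) * d ^ (-(1 / p)) = d⁻¹ * d ^ (-t) := by
    rw [← Real.rpow_neg_one, ← Real.rpow_add hd, ← Real.rpow_add hd]
    congr 1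
    rw [ht]; ring
  calc β / 2 * u ^ (-κ) * (1 / (p * d)) ^ (1 / p)
      ≤ β / 2 * d ^ (-κ) * d ^ (-(1 / p)) := by gcongr
    _ = β / 2 * (d⁻¹ * d ^ (-t)) := by rw [mul_assoc, h5]
    _ ≤ t ^ t / 2 * (d⁻¹ * d ^ (-t)) := by gcongr
    _ = 1 / (2 * d) * (1 / (1 / t * d)) ^ t := by rw [h4]; field_simp

/-- The one-dimensional lower bound. The minorant `h` of `|U[g]|` is recorded instead of `U[g]`
itself, which spares proving that `U[g]` is measurable. -/
lemma exists_extremiser {α β lam p : ℝ} (hα : α ∈ Ioo (0 : ℝ) 1) (hβ : β ∈ Ioo (0 : ℝ) 1)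
    (hlam : lam ∈ Ioo (0 : ℝ) 1) (hκ : α + β + lam < 1) (hp : 1 / (1 - α) < p)
    (hp' : p ≤ 1 / (1 - α - lam)) :
    0 < p ∧ 0 < 1 / (1 / p + (α + β + lam) - 1) ∧
    ∃ g h : ℝ → ℝ, Measurable g ∧ Measurable h ∧
      halfLineNorm p g ≠ 0 ∧ halfLineNorm p g ≠ ⊤ ∧
      (∀ x, |h x| ≤ |cesaroHardy1 α β lam g x|) ∧
      ENNReal.ofReal (β / 2 * (p - 1 / (1 - α)) ^ (-(α + β + lam))) * halfLineNorm p g ≤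
        halfLineNorm (1 / (1 / p + (α + β + lam) - 1)) h := by
  obtain ⟨hα0, hα1⟩ := hα
  obtain ⟨hβ0, hβ1⟩ := hβ
  obtain ⟨hl0, hl1⟩ := hlam
  have ha : 0 < 1 - α := by linarith
  have hal : 0 < 1 - α - lam := by linarith
  have hp1 : 1 ≤ p := by
    refine le_trans ?_ hp.le
    rw [le_div_iff₀ ha]; linarith
  have hp0 : 0 < p := by linarith
  obtain ⟨d, hd⟩ : ∃ d, d = 1 - α - 1 / p := ⟨_, rfl⟩
  obtain ⟨t, ht⟩ : ∃ t, t = 1 / p + (α + β + lam) - 1 := ⟨_, rfl⟩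
  have hd0 : 0 < d := by
    rw [hd, sub_pos]; exact (one_div_lt ha hp0).1 hp
  have hpl : 1 - α - lam ≤ 1 / p := (le_one_div hp0 hal).1 hp'
  have hβt : β ≤ t := by rw [ht]; linarith
  have ht0 : 0 < t := hβ0.trans_le hβt
  have htd : t = β + lam - d := by rw [ht, hd]; ring
  have hdu : d ≤ p - 1 / (1 - α) := by
    have h : p - 1 / (1 - α) - d = d * (p - (1 - α)) / (1 - α) := by
      rw [hd]; field_simp
    have : 0 ≤ d * (p - (1 - α)) / (1 - α) :=
      div_nonneg (mul_nonneg hd0.le (by linarith)) ha.le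
    linarith
  have eg : (-(1 / p) + d) * p + 1 = p * d := by field_simp; ring
  have eh : (2 * d - β - lam) * (1 / t) + 1 = 1 / t * d := by
    rw [show 2 * d - β - lam = d - t by rw [htd]; ring]; field_simp; ring
  have Ng : halfLineNorm p (truncPow 1 (-(1 / p) + d)) =
      ENNReal.ofReal ((1 / (p * d)) ^ (1 / p)) := by
    rw [halfLineNorm_truncPow one_pos hp0 (by rw [eg]; positivity), eg, one_mul]
  have Nh : halfLineNorm (1 / t) (truncPow (1 / (2 * d)) (2 * d - β - lam)) =
      ENNReal.ofReal (1 / (2 * d) * (1 / (1 / t * d)) ^ t) := by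
    rw [halfLineNorm_truncPow (by positivity) (by positivity) (by rw [eh]; positivity), eh,
      one_div_one_div]
  rw [← ht]
  refine ⟨hp0, by positivity, truncPow 1 (-(1 / p) + d),
    truncPow (1 / (2 * d)) (2 * d - β - lam), measurable_truncPow _ _, measurable_truncPow _ _,
    ?_, ?_, ?_, ?_⟩
  · rw [Ng]
    exact (ENNReal.ofReal_pos.2 (by positivity)).ne'
  · rw [Ng]
    exact ENNReal.ofReal_ne_top
  · exact truncPow_le_cesaroHardy1 hl0 hl1 (by positivity) (by rw [hd]; ring)
  · have hu : 0 < p - 1 / (1 - α) := by linarith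
    rw [Ng, Nh, ← ENNReal.ofReal_mul (by positivity)]
    exact ENNReal.ofReal_le_ofReal
      (ratio_bound hβ0 (by linarith) hp1 hβt (by linarith) hd0 hdu ht)

/-- Theorem 3.1 B, lower bound (two-dimensional case): there is a constant
`c > 0` such that for all `pⱼ ∈ (p₋⁽ʲ⁾, p₊⁽ʲ⁾]`, with `qⱼ` defined by
`1 + 1/qⱼ = 1/pⱼ + κⱼ`, there is a nonzero product function
`f(x₁,x₂) = g₁(x₁) g₂(x₂)` with `‖f‖_{p₁,p₂} < ∞` and
`‖U₂[f]‖_{q₁,q₂} ≥ c (p₁-p₋⁽¹⁾)^(-κ₁) (p₂-p₋⁽²⁾)^(-κ₂) ‖f‖_{p₁,p₂}`. -/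
theorem cesaroHardy2_lower_bound
    (α₁ α₂ β₁ β₂ lam₁ lam₂ : ℝ)
    (hα₁ : α₁ ∈ Ioo (0 : ℝ) 1) (hα₂ : α₂ ∈ Ioo (0 : ℝ) 1)
    (hβ₁ : β₁ ∈ Ioo (0 : ℝ) 1) (hβ₂ : β₂ ∈ Ioo (0 : ℝ) 1)
    (hlam₁ : lam₁ ∈ Ioo (0 : ℝ) 1) (hlam₂ : lam₂ ∈ Ioo (0 : ℝ) 1)
    (hκ₁ : α₁ + β₁ + lam₁ < 1) (hκ₂ : α₂ + β₂ + lam₂ < 1) :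
    ∃ c : ℝ, 0 < c ∧
      ∀ p₁ p₂ : ℝ,
        1 / (1 - α₁) < p₁ → p₁ ≤ 1 / (1 - α₁ - lam₁) →
        1 / (1 - α₂) < p₂ → p₂ ≤ 1 / (1 - α₂ - lam₂) →
        ∃ g₁ g₂ : ℝ → ℝ,
          Measurable (Function.uncurry fun x₁ x₂ => g₁ x₁ * g₂ x₂) ∧
          mixedNorm p₁ p₂ (fun x₁ x₂ => g₁ x₁ * g₂ x₂) ≠ 0 ∧
          mixedNorm p₁ p₂ (fun x₁ x₂ => g₁ x₁ * g₂ x₂) < ⊤ ∧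
          ENNReal.ofReal
              (c * (p₁ - 1 / (1 - α₁)) ^ (-(α₁ + β₁ + lam₁)) *
                (p₂ - 1 / (1 - α₂)) ^ (-(α₂ + β₂ + lam₂))) *
            mixedNorm p₁ p₂ (fun x₁ x₂ => g₁ x₁ * g₂ x₂)
            ≤ mixedNorm (1 / (1 / p₁ + (α₁ + β₁ + lam₁) - 1))
                (1 / (1 / p₂ + (α₂ + β₂ + lam₂) - 1))
                (cesaroHardy2 α₁ α₂ β₁ β₂ lam₁ lam₂
                  fun x₁ x₂ => g₁ x₁ * g₂ x₂) := by
  refine ⟨β₁ / 2 * (β₂ / 2), by have := hβ₁.1; have := hβ₂.1; positivity, ?_⟩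
  intro p₁ p₂ h₁ h₁' h₂ h₂'
  obtain ⟨hp₁, hq₁, g₁, k₁, mg₁, mk₁, n₁, f₁, le₁, b₁⟩ :=
    exists_extremiser hα₁ hβ₁ hlam₁ hκ₁ h₁ h₁'
  obtain ⟨hp₂, hq₂, g₂, k₂, mg₂, mk₂, n₂, f₂, le₂, b₂⟩ :=
    exists_extremiser hα₂ hβ₂ hlam₂ hκ₂ h₂ h₂'
  refine ⟨g₁, g₂, by unfold Function.uncurry; fun_prop, ?_, ?_, ?_⟩
  · rw [mixedNorm_prod hp₁ hp₂ mg₁ mg₂]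
    exact mul_ne_zero n₁ n₂
  · rw [mixedNorm_prod hp₁ hp₂ mg₁ mg₂]
    exact ENNReal.mul_lt_top f₁.lt_top f₂.lt_top
  · refine le_trans ?_ (mixedNorm_mono hq₁ hq₂ (f := fun x₁ x₂ => k₁ x₁ * k₂ x₂) ?_)
    · rw [mixedNorm_prod hp₁ hp₂ mg₁ mg₂, mixedNorm_prod hq₁ hq₂ mk₁ mk₂]
      refine le_trans (le_of_eq ?_) (mul_le_mul' b₁ b₂)
      have hA : 0 ≤ β₁ / 2 * (p₁ - 1 / (1 - α₁)) ^ (-(α₁ + β₁ + lam₁)) :=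
        mul_nonneg (by linarith [hβ₁.1]) (Real.rpow_nonneg (by linarith) _)
      rw [mul_mul_mul_comm, ← ENNReal.ofReal_mul hA]
      congr 2
      ring
    · intro x₁ x₂
      rw [cesaroHardy2_prod, abs_mul, abs_mul]
      exact mul_le_mul (le₁ x₁) (le₂ x₂) (abs_nonneg _) (abs_nonneg _)
end
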